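/- arXiv:2211.12802 — 2 statements merged into one kernel-verified Lean document; each statement's English description precedes it below -/
import Mathlib

section
/- Let Ω, Ω' ⊂ ℝ^n be open, n ≥ 2, and let f ∈ W^{1,1}_{loc}(Ω; Ω') be a homeomorphism. Then K^{fine}_f(x)^{n-1} J_f(x) = (2^n/ω_n) ‖∇f(x)‖^n for a.e. x ∈ Ω at which K^{fine}_f(x) < ∞. -/
open MeasureTheory Metric Set Filter ENNReal NNReal Topology

noncomputable section

/-- Euclidean space `ℝⁿ`. -/
abbrev En (n : ℕ) : Type := EuclideanSpace ℝ (Fin n)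

variable {n : ℕ}

/-- `g` is the weak (distributional) gradient of `u : ℝⁿ → ℝ` on all of `ℝⁿ`. -/
def IsWeakGrad (u : En n → ℝ) (g : En n → (En n →L[ℝ] ℝ)) : Prop :=
  ∀ φ : En n → ℝ, ContDiff ℝ 1 φ → HasCompactSupport φ →
    ∀ v : En n, ∫ x, u x * fderiv ℝ φ x v = - ∫ x, φ x * g x v

/-- The Sobolev 1-capacity: infimum of `W^{1,1}` norms of functions `u ≥ 1` on a
neighborhood of `A`. -/
def cap1 (A : Set (En n)) : ℝ≥0∞ :=
  sInf { c : ℝ≥0∞ | ∃ u : En n → ℝ, ∃ g : En n → (En n →L[ℝ] ℝ),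
    Integrable u ∧ Integrable (fun x => ‖g x‖) ∧ IsWeakGrad u g ∧
    (∃ V : Set (En n), IsOpen V ∧ A ⊆ V ∧ ∀ x ∈ V, 1 ≤ u x) ∧
    c = ENNReal.ofReal ((∫ x, |u x|) + ∫ x, ‖g x‖) }

/-- A set `U ⊆ ℝⁿ` is 1-finely open. -/
def FinelyOpen1 (U : Set (En n)) : Prop :=
  ∀ x ∈ U, Tendsto (fun r : ℝ => cap1 (Uᶜ ∩ ball x r) / ENNReal.ofReal (r ^ (n - 1)))
    (𝓝[>] 0) (𝓝 0)

/-- The relaxed quasiconformality quotient `K_{f,U}(x,r)`. -/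
def KfU (f : En n → En n) (U : Set (En n)) (x : En n) (r : ℝ) : ℝ≥0∞ :=
  if volume (f '' ball x r) = 0 then ∞
  else (EMetric.diam (f '' (ball x r ∩ U)) ^ n / volume (f '' ball x r)) ^ (((n : ℝ) - 1)⁻¹)

/-- Fine quasiconformal dilatation `K_f^fine(x)`. -/
def Kfine (f : En n → En n) (x : En n) : ℝ≥0∞ :=
  ⨅ (U : Set (En n)) (_ : FinelyOpen1 U) (_ : x ∈ U),
    Filter.limsup (fun r => KfU f U x r) (𝓝[>] 0)

/-- Metric quasiconformal dilatation `K_f(x)`. -/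
def Kmetric (f : En n → En n) (x : En n) : ℝ≥0∞ :=
  Filter.limsup (fun r => KfU f univ x r) (𝓝[>] 0)

/-- Volume derivative (Jacobian) `J_f(x)`. -/
def Jvol (f : En n → En n) (x : En n) : ℝ≥0∞ :=
  Filter.limsup (fun r => volume (f '' ball x r) / volume (ball x r)) (𝓝[>] 0)

/-- `g` is the weak gradient of the mapping `f : ℝⁿ → ℝⁿ` on the open set `Ω`. -/
def HasWeakGradOn (f : En n → En n) (g : En n → (En n →L[ℝ] En n)) (Ω : Set (En n)) : Prop :=
  ∀ φ : En n → ℝ, ContDiff ℝ 1 φ → HasCompactSupport φ → tsupport φ ⊆ Ω →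
    ∀ v : En n, ∫ x in Ω, (fderiv ℝ φ x v) • f x = - ∫ x in Ω, φ x • g x v

/-- The precise representative `f*` (componentwise limsup of ball averages). -/
def precise (f : En n → En n) (x : En n) : En n :=
  (EuclideanSpace.equiv (Fin n) ℝ).symm
    (fun i => Filter.limsup (fun r => ⨍ y in ball x r, f y i) (𝓝[>] 0))

/-- Centered Hardy–Littlewood maximal function of `u : ℝⁿ → ℝ`. -/
def maxFn (u : En n → ℝ) (x : En n) : ℝ≥0∞ :=
  ⨆ (r : ℝ) (_ : 0 < r), (volume (ball x r))⁻¹ * ∫⁻ y in ball x r, ‖u y‖₊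

/-- Centered Hardy–Littlewood maximal function of `ρ : ℝⁿ → ℝ≥0∞`. -/
def maxFn' (ρ : En n → ℝ≥0∞) (x : En n) : ℝ≥0∞ :=
  ⨆ (r : ℝ) (_ : 0 < r), (volume (ball x r))⁻¹ * ∫⁻ y in ball x r, ρ y

/-!
At almost every point `x` three things happen: `x` is a Lebesgue point of `g`, the volume derivative
`J` exists as a finite limit, and hence, by the first, `f` is 1-finely differentiable at `x` with
derivative `A = g x`. For the latter, the set where the remainder `h y = f y - f x - A (y - x)`
exceeds `ε ‖y - x‖` is cut into dyadic annuli; on each of them a truncation of a mollification of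
`‖h‖` is a competitor for the capacity, and a Poincaré inequality centred at `x` bounds its energy
by the mean oscillation of `g`, so the set is 1-thin at `x`.

Given this, `f '' (ball x r ∩ U)` has diameter at most `2 (‖A‖ + ε) r` for a suitable 1-finely
open `U`, and at least `(2 ‖A‖ - ε) r` for every 1-finely open `U ∋ x`, as such sets have density
one at `x`. Dividing by `|f (ball x r)| ~ J ω_n rⁿ` gives `K^fine(x)^{n-1} J = (2ⁿ/ω_n) ‖A‖ⁿ` when
`J ≠ 0`; when `J = 0`, finiteness of `K^fine(x)` forces `A = 0`.

Local integrability of `‖g‖` does not make `g` measurable. That `g` is locally integrable is instead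
extracted from the integration by parts formula and the injectivity of `f`.
-/

lemma cap1_mono {A B : Set (En n)} (h : A ⊆ B) : cap1 A ≤ cap1 B := by
  refine sInf_le_sInf ?_
  rintro c ⟨u, g, hu, hg, hw, ⟨V, hV, hBV, hV1⟩, rfl⟩
  exact ⟨u, g, hu, hg, hw, ⟨V, hV, h.trans hBV, hV1⟩, rfl⟩

lemma cap1_empty : cap1 (∅ : Set (En n)) = 0 :=
  nonpos_iff_eq_zero.1 <| sInf_le ⟨fun _ => 0, fun _ => 0, integrable_zero _ _ _,
    by simp, fun φ _ _ v => by simp, ⟨∅, isOpen_empty, Subset.rfl, by simp⟩, by simp⟩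

section SegmentIntegral

variable {E F : Type*} [NormedAddCommGroup E] [NormedSpace ℝ E]
  [NormedAddCommGroup F] [NormedSpace ℝ F]

/-- The integral of `χ` over the segment from `y` to `y - T • v`; it is a primitive, in the
direction `v`, of `χ - χ (· - T • v)`. -/
def segmentIntegral (χ : E → F) (v : E) (T : ℝ) (y : E) : F :=
  ∫ s in (0 : ℝ)..T, χ (y - s • v)

open scoped Convolution in
lemma contDiff_segmentIntegral [MeasurableSpace E] [BorelSpace E] {χ : E → F} {k : ℕ∞}
    (hχ : ContDiff ℝ k χ) (hcs : HasCompactSupport χ) (v : E) {T : ℝ} (hT : 0 ≤ T) :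
    ContDiff ℝ k (segmentIntegral χ v T) := by
  set μ : Measure E := Measure.map (fun s : ℝ => s • v) (volume.restrict (Ioc 0 T)) with hμ
  have hmeas : Measurable fun s : ℝ => s • v := (by fun_prop : Continuous _).measurable
  have heq : segmentIntegral χ v T = (fun _ => (1 : ℝ)) ⋆[ContinuousLinearMap.lsmul ℝ ℝ, μ] χ := by
    ext y
    have hcont : Continuous fun t => χ (y - t) := hχ.continuous.comp (by fun_prop)
    simp only [segmentIntegral, intervalIntegral.integral_of_le hT, convolution_def,
      ContinuousLinearMap.lsmul_apply, one_smul]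
    rw [hμ, integral_map hmeas.aemeasurable
      (hcont.stronglyMeasurable_of_hasCompactSupport
        (hcs.comp_homeomorph (Homeomorph.subLeft y))).aestronglyMeasurable]
  have : IsFiniteMeasure μ := by rw [hμ]; infer_instance
  rw [heq]
  exact hcs.contDiff_convolution_right _ (locallyIntegrable_const _) hχ

lemma hasCompactSupport_segmentIntegral [ProperSpace E] {χ : E → F} {x : E} {r : ℝ}
    (hsupp : ∀ y ∉ ball x r, χ y = 0) (v : E) {T : ℝ} (hT : 0 ≤ T) :
    HasCompactSupport (segmentIntegral χ v T) := by
  refine HasCompactSupport.intro (isCompact_closedBall x (r + T * ‖v‖)) fun y hy => ?_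
  refine (intervalIntegral.integral_congr (g := fun _ => 0) fun s hs => ?_).trans (by simp)
  rw [uIcc_of_le hT] at hs
  refine hsupp _ fun h => hy ?_
  rw [mem_ball, dist_eq_norm] at h
  rw [mem_closedBall, dist_eq_norm]
  calc ‖y - x‖ = ‖(y - s • v - x) + s • v‖ := by congr 1; abel
    _ ≤ ‖y - s • v - x‖ + ‖s • v‖ := norm_add_le _ _
    _ ≤ r + T * ‖v‖ := by
      rw [norm_smul, Real.norm_of_nonneg hs.1]
      gcongr
      exact hs.2

lemma norm_segmentIntegral_le {χ : E → F} {x v : E} {r T : ℝ} (hr : 0 ≤ r) (hT : 0 ≤ T)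
    (hv : ‖v‖ = 1) (hχ : ∀ y, ‖χ y‖ ≤ 1) (hsupp : ∀ y ∉ ball x r, χ y = 0) (y : E) :
    ‖segmentIntegral χ v T y‖ ≤ 4 * r := by
  rw [segmentIntegral, intervalIntegral.integral_of_le hT]
  by_cases! hne : ∀ s : ℝ, y - s • v ∉ ball x r
  · simpa only [fun s => hsupp _ (hne s), integral_zero, norm_zero] using by positivity
  obtain ⟨s₀, hs₀⟩ := hne
  have hzero : ∀ s ∉ closedBall s₀ (2 * r), χ (y - s • v) = 0 := by
    intro s hs
    refine hsupp _ fun h => hs ?_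
    rw [mem_ball, dist_eq_norm] at h hs₀
    rw [mem_closedBall, Real.dist_eq]
    calc |s - s₀| = ‖(s - s₀) • v‖ := by rw [norm_smul, hv, mul_one, Real.norm_eq_abs]
      _ = ‖(y - s₀ • v - x) - (y - s • v - x)‖ := by congr 1; rw [sub_smul]; abel
      _ ≤ 2 * r := (norm_sub_le _ _).trans (by linarith)
  have hle : ∀ s, ‖χ (y - s • v)‖ ≤ (closedBall s₀ (2 * r)).indicator (fun _ => (1 : ℝ)) s := by
    intro s
    by_cases hs : s ∈ closedBall s₀ (2 * r)
    · rw [indicator_of_mem hs]; exact hχ _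
    · rw [indicator_of_notMem hs, hzero s hs, norm_zero]
  have hi : Integrable ((closedBall s₀ (2 * r)).indicator fun _ => (1 : ℝ)) :=
    (integrable_indicator_iff measurableSet_closedBall).2
      (integrableOn_const measure_closedBall_lt_top.ne)
  calc _ ≤ ∫ s in Ioc 0 T, (closedBall s₀ (2 * r)).indicator (fun _ => (1 : ℝ)) s :=
        norm_integral_le_of_norm_le hi.integrableOn (ae_of_all _ hle)
    _ ≤ ∫ s, (closedBall s₀ (2 * r)).indicator (fun _ => (1 : ℝ)) s :=
        setIntegral_le_integral hi (ae_of_all _ fun s => indicator_nonneg (by simp) s)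
    _ = 4 * r := by
        rw [integral_indicator_const _ measurableSet_closedBall,
          Real.volume_real_closedBall (by positivity), smul_eq_mul]
        ring

lemma hasDerivAt_segmentIntegral_line [CompleteSpace F] {χ : E → F} (hχ : Continuous χ)
    (v : E) (T : ℝ) (y : E) :
    HasDerivAt (fun t : ℝ => segmentIntegral χ v T (y + t • v)) (χ y - χ (y - T • v)) 0 := by
  have hk : Continuous fun s : ℝ => χ (y + s • v) := by fun_prop
  have heq : ∀ t : ℝ, segmentIntegral χ v T (y + t • v) =
      (∫ s in (0 : ℝ)..t, χ (y + s • v)) - ∫ s in (0 : ℝ)..(t - T), χ (y + s • v) := by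
    intro t
    have hsub := intervalIntegral.integral_comp_sub_left (a := 0) (b := T)
      (fun s => χ (y + s • v)) t
    rw [intervalIntegral.integral_interval_sub_left (hk.intervalIntegrable _ _)
      (hk.intervalIntegrable _ _)]
    rw [sub_zero] at hsub
    rw [← hsub]
    refine intervalIntegral.integral_congr fun s _ => ?_
    congr 1; rw [sub_smul]; abel
  have hF : ∀ a : ℝ, HasDerivAt (fun t => ∫ s in (0 : ℝ)..t, χ (y + s • v)) (χ (y + a • v)) a :=
    fun a => (hk.integral_hasStrictDerivAt 0 a).hasDerivAt
  have hder := (hF 0).sub ((hF (0 - T)).comp_sub_const 0 T)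
  simp only [zero_smul, add_zero, zero_sub, neg_smul, ← sub_eq_add_neg] at hder
  exact hder.congr_of_eventuallyEq (Eventually.of_forall heq)

lemma fderiv_segmentIntegral_apply [CompleteSpace F] [MeasurableSpace E] [BorelSpace E] {χ : E → F}
    (hχ : ContDiff ℝ 1 χ) (hcs : HasCompactSupport χ) (v : E) {T : ℝ} (hT : 0 ≤ T) (y : E) :
    fderiv ℝ (segmentIntegral χ v T) y v = χ y - χ (y - T • v) :=
  ((contDiff_segmentIntegral (k := 1) hχ hcs v hT).differentiable one_ne_zero
    y).hasFDerivAt.hasLineDerivAt v |>.unique (hasDerivAt_segmentIntegral_line hχ.continuous v T y)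

end SegmentIntegral

lemma hasCompactSupport_of_eq_zero_off_ball {E F : Type*} [PseudoMetricSpace E] [ProperSpace E]
    [Zero F] {χ : E → F} {x : E} {r : ℝ} (hsupp : ∀ y ∉ ball x r, χ y = 0) :
    HasCompactSupport χ :=
  HasCompactSupport.intro (isCompact_closedBall x r) fun y hy =>
    hsupp y fun h => hy (ball_subset_closedBall h)

lemma tendsto_integral_mul_comp_sub_smul {E : Type*} [NormedAddCommGroup E] [NormedSpace ℝ E]
    [MeasurableSpace E] [BorelSpace E] {μ : Measure E} {u χ : E → ℝ} (hu : Integrable u μ)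
    (hχ : Continuous χ) (hχ1 : ∀ y, ‖χ y‖ ≤ 1) {x v : E} {r : ℝ} (hv : v ≠ 0)
    (hsupp : ∀ y ∉ ball x r, χ y = 0) :
    Tendsto (fun T : ℝ => ∫ y, u y * χ (y - T • v) ∂μ) atTop (𝓝 0) := by
  have hzero : ∀ y, ∀ᶠ T : ℝ in atTop, u y * χ (y - T • v) = 0 := by
    intro y
    filter_upwards [(tendsto_id.atTop_mul_const (norm_pos_iff.2 hv)).eventually_gt_atTop
      (r + ‖y - x‖), eventually_ge_atTop 0] with T hT hT0
    rw [hsupp, mul_zero]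
    intro h
    rw [mem_ball, dist_eq_norm] at h
    have : T * ‖v‖ ≤ ‖y - x‖ + ‖y - T • v - x‖ :=
      calc T * ‖v‖ = ‖T • v‖ := by rw [norm_smul, Real.norm_of_nonneg hT0]
        _ = ‖(y - x) - (y - T • v - x)‖ := by congr 1; abel
        _ ≤ _ := norm_sub_le _ _
    simp only [id] at hT
    linarith
  rw [← integral_zero E ℝ (μ := μ)]
  refine tendsto_integral_filter_of_dominated_convergence (fun y => ‖u y‖)
    (Eventually.of_forall fun T => hu.aestronglyMeasurable.mul ?_)
    (Eventually.of_forall fun T => ae_of_all _ fun y => ?_) hu.norm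
    (ae_of_all _ fun y => tendsto_const_nhds.congr' ((hzero y).mono fun T hT => hT.symm))
  · exact (hχ.comp (continuous_sub_right _)).aestronglyMeasurable
  · rw [norm_mul]
    exact mul_le_of_le_one_right (norm_nonneg _) (hχ1 _)

/-- The weak gradient is tested against the primitives `segmentIntegral χ v T`, which are bounded
by `4 * r` uniformly in `T`; the translated copy of `χ` escapes to infinity as `T → ∞`. -/
lemma IsWeakGrad.integral_mul_le [NeZero n] {u : En n → ℝ} {g : En n → (En n →L[ℝ] ℝ)}
    (hw : IsWeakGrad u g) (hu : Integrable u) (hg : Integrable fun x => ‖g x‖)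
    {χ : En n → ℝ} (hχ : ContDiff ℝ 1 χ) (hχ1 : ∀ y, ‖χ y‖ ≤ 1) {x : En n} {r : ℝ} (hr : 0 ≤ r)
    (hsupp : ∀ y ∉ ball x r, χ y = 0) :
    ∫ y, u y * χ y ≤ 4 * r * ∫ y, ‖g y‖ := by
  obtain ⟨v, hv⟩ : ∃ v : En n, ‖v‖ = 1 := exists_norm_eq _ zero_le_one
  have hcs := hasCompactSupport_of_eq_zero_off_ball hsupp
  have hint : ∀ w, Integrable fun y => u y * χ (y - w) := fun w =>
    hu.mul_bdd (c := 1) (hχ.continuous.comp (continuous_sub_right w)).aestronglyMeasurable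
      (ae_of_all _ fun y => hχ1 _)
  have hbound : ∀ T : ℝ, 0 ≤ T →
      ∫ y, u y * χ y ≤ 4 * r * (∫ y, ‖g y‖) + ∫ y, u y * χ (y - T • v) := by
    intro T hT
    have htest := hw _ (contDiff_segmentIntegral (k := 1) hχ hcs v hT)
      (hasCompactSupport_segmentIntegral hsupp v hT) v
    simp only [fderiv_segmentIntegral_apply hχ hcs v hT, mul_sub] at htest
    rw [integral_sub (by simpa using hint 0) (hint _)] at htest
    have hle : ‖∫ y, segmentIntegral χ v T y * g y v‖ ≤ ∫ y, 4 * r * ‖g y‖ := by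
      refine norm_integral_le_of_norm_le (hg.const_mul _) (ae_of_all _ fun y => ?_)
      rw [norm_mul]
      have hgv := (g y).le_opNorm v
      rw [hv, mul_one] at hgv
      gcongr
      exact norm_segmentIntegral_le hr hT hv hχ1 hsupp y
    rw [integral_const_mul] at hle
    linarith [neg_le_of_abs_le hle]
  have hlim := (tendsto_integral_mul_comp_sub_smul hu hχ.continuous hχ1
    (norm_ne_zero_iff.1 (hv ▸ one_ne_zero)) hsupp).const_add (4 * r * ∫ y, ‖g y‖)
  rw [add_zero] at hlim
  exact ge_of_tendsto hlim ((eventually_ge_atTop 0).mono hbound)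

lemma IsWeakGrad.measure_le_of_isCompact [NeZero n] {u : En n → ℝ} {g : En n → (En n →L[ℝ] ℝ)}
    (hw : IsWeakGrad u g) (hu : Integrable u) (hg : Integrable fun x => ‖g x‖)
    {x : En n} {r : ℝ} (hr : 0 ≤ r) {V K : Set (En n)} (hV : IsOpen V) (hVr : V ⊆ ball x r)
    (hV1 : ∀ y ∈ V, 1 ≤ u y) (hK : IsCompact K) (hKV : K ⊆ V) :
    volume K ≤ ENNReal.ofReal (4 * r * ∫ y, ‖g y‖) := by
  obtain ⟨χ, hχ, hχr, hχs, hχ1⟩ := exists_contMDiff_support_eq_eq_one_iff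
    (n := 1) (modelWithCornersSelf ℝ (En n)) hV hK.isClosed hKV
  rw [contMDiff_iff_contDiff] at hχ
  have h01 : ∀ y, χ y ∈ Icc (0 : ℝ) 1 := fun y => hχr (mem_range_self y)
  have hnorm : ∀ y, ‖χ y‖ ≤ 1 := fun y => by rw [Real.norm_of_nonneg (h01 y).1]; exact (h01 y).2
  have h0 : ∀ y ∉ V, χ y = 0 := fun y hy => by rwa [← hχs, Function.notMem_support] at hy
  have hsupp : ∀ y ∉ ball x r, χ y = 0 := fun y hy => h0 y fun h => hy (hVr h)
  have hχi : Integrable χ :=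
    hχ.continuous.integrable_of_hasCompactSupport (hasCompactSupport_of_eq_zero_off_ball hsupp)
  have hKχ : volume K ≤ ENNReal.ofReal (∫ y, χ y) := by
    rw [ofReal_integral_eq_lintegral_ofReal hχi (ae_of_all _ fun y => (h01 y).1),
      ← lintegral_indicator_one hK.measurableSet]
    refine lintegral_mono fun y => ?_
    by_cases hy : y ∈ K
    · simp [hy, (hχ1 y).1 hy]
    · simp [hy]
  have hχu : ∫ y, χ y ≤ ∫ y, u y * χ y := by
    refine integral_mono hχi (hu.mul_bdd (c := 1) hχ.continuous.aestronglyMeasurable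
      (ae_of_all _ hnorm)) fun y => ?_
    by_cases hy : y ∈ V
    · exact le_mul_of_one_le_left (h01 y).1 (hV1 y hy)
    · simp [h0 y hy]
  exact hKχ.trans <| ENNReal.ofReal_le_ofReal <|
    hχu.trans (hw.integral_mul_le hu hg hχ hnorm hr hsupp)

lemma volume_le_mul_cap1 [NeZero n] {A : Set (En n)} {x : En n} {r : ℝ} (hr : 0 < r)
    (hA : A ⊆ ball x r) : volume A ≤ ENNReal.ofReal (4 * r) * cap1 A := by
  have h4r : ENNReal.ofReal (4 * r) ≠ 0 := by simp [hr]
  rw [mul_comm, ← ENNReal.div_le_iff_le_mul (Or.inl h4r) (Or.inl ENNReal.ofReal_ne_top)]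
  refine le_sInf ?_
  rintro c ⟨u, g, hu, hg, hw, ⟨V, hV, hAV, hV1⟩, rfl⟩
  rw [ENNReal.div_le_iff_le_mul (Or.inl h4r) (Or.inl ENNReal.ofReal_ne_top), mul_comm,
    ← ENNReal.ofReal_mul (by positivity)]
  have hWo : IsOpen (V ∩ ball x r) := hV.inter isOpen_ball
  refine (measure_mono (subset_inter hAV hA)).trans ?_
  rw [hWo.measure_eq_iSup_isCompact]
  refine iSup₂_le fun K hKW => iSup_le fun hK => ?_
  refine (hw.measure_le_of_isCompact hu hg hr.le hWo inter_subset_right (fun y hy => hV1 y hy.1)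
    hK hKW).trans (ENNReal.ofReal_le_ofReal ?_)
  have : 0 ≤ ∫ y, |u y| := integral_nonneg fun y => abs_nonneg _
  gcongr
  linarith

section SummableIntegrals

variable {α E : Type*} [MeasurableSpace α] {μ : Measure α} [NormedAddCommGroup E]

lemma ae_summable_of_tsum_lintegral_enorm_ne_top [CompleteSpace E] {ι : Type*} [Countable ι]
    {F : ι → α → E} (hF : ∀ k, AEStronglyMeasurable (F k) μ)
    (hsum : ∑' k, ∫⁻ y, ‖F k y‖ₑ ∂μ ≠ ∞) : ∀ᵐ y ∂μ, Summable fun k => F k y := by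
  simp only [← eLpNorm_one_eq_lintegral_enorm] at hsum
  filter_upwards [summable_norm_of_tsum_eLpNorm_ne_top le_rfl hF hsum] with y hy using hy.of_norm

lemma lintegral_enorm_tsum_le {ι : Type*} [Countable ι] {F : ι → α → E}
    (hF : ∀ k, AEStronglyMeasurable (F k) μ) :
    ∫⁻ y, ‖∑' k, F k y‖ₑ ∂μ ≤ ∑' k, ∫⁻ y, ‖F k y‖ₑ ∂μ := by
  rw [← lintegral_tsum fun k => (hF k).enorm]
  exact lintegral_mono fun y => enorm_tsum_le_tsum_enorm

lemma integrable_tsum_of_tsum_lintegral_enorm_ne_top [CompleteSpace E] {F : ℕ → α → E}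
    (hF : ∀ k, AEStronglyMeasurable (F k) μ) (hsum : ∑' k, ∫⁻ y, ‖F k y‖ₑ ∂μ ≠ ∞) :
    Integrable (fun y => ∑' k, F k y) μ := by
  refine ⟨aestronglyMeasurable_of_tendsto_ae atTop
    (f := fun m y => ∑ k ∈ Finset.range m, F k y)
    (fun m => Finset.aestronglyMeasurable_fun_sum _ fun k _ => hF k) ?_,
    (lintegral_enorm_tsum_le hF).trans_lt hsum.lt_top⟩
  filter_upwards [ae_summable_of_tsum_lintegral_enorm_ne_top hF hsum] with y hy
    using hy.hasSum.tendsto_sum_nat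

lemma tsum_lintegral_enorm_ne_top_of_norm_le {ι F : Type*} [NormedAddCommGroup F] {G : ι → α → E}
    {H : ι → α → F} {C : ℝ} (hle : ∀ k y, ‖H k y‖ ≤ C * ‖G k y‖)
    (hsum : ∑' k, ∫⁻ y, ‖G k y‖ₑ ∂μ ≠ ∞) : ∑' k, ∫⁻ y, ‖H k y‖ₑ ∂μ ≠ ∞ := by
  refine ne_top_of_le_ne_top (ENNReal.mul_ne_top (ENNReal.ofReal_ne_top (r := C)) hsum) ?_
  rw [← ENNReal.tsum_mul_left]
  refine ENNReal.tsum_le_tsum fun k => ?_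
  rw [← lintegral_const_mul' _ _ ENNReal.ofReal_ne_top]
  refine lintegral_mono fun y => ?_
  rw [← ofReal_norm, ← ofReal_norm, ← ENNReal.ofReal_mul' (norm_nonneg _)]
  exact ENNReal.ofReal_le_ofReal (hle k y)

end SummableIntegrals

lemma IsWeakGrad.congr_ae {u w : En n → ℝ} {g : En n → (En n →L[ℝ] ℝ)} (hg : IsWeakGrad u g)
    (huw : u =ᵐ[volume] w) : IsWeakGrad w g := by
  intro φ hφ hφc v
  rw [← hg φ hφ hφc v]
  refine integral_congr_ae ?_
  filter_upwards [huw] with y hy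
  rw [hy]

lemma isWeakGrad_fderiv {u : En n → ℝ} (hu : ContDiff ℝ 1 u) : IsWeakGrad u (fderiv ℝ u) := by
  intro φ hφ hφc v
  have hdu : Continuous fun y => fderiv ℝ u y v :=
    (hu.continuous_fderiv one_ne_zero).clm_apply continuous_const
  have hdφ : Continuous fun y => fderiv ℝ φ y v :=
    (hφ.continuous_fderiv one_ne_zero).clm_apply continuous_const
  rw [integral_mul_fderiv_eq_neg_fderiv_mul_of_integrable]
  · simp only [mul_comm]
  · exact (hdu.mul hφ.continuous).integrable_of_hasCompactSupport hφc.mul_left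
  · exact (hu.continuous.mul hdφ).integrable_of_hasCompactSupport (hφc.fderiv_apply ℝ v).mul_left
  · exact (hu.continuous.mul hφ.continuous).integrable_of_hasCompactSupport hφc.mul_left
  · exact fun y _ => hu.differentiable one_ne_zero y
  · exact fun y _ => hφ.differentiable one_ne_zero y

lemma isWeakGrad_tsum {ι : Type*} [Countable ι] {u : ι → En n → ℝ} {g : ι → En n → (En n →L[ℝ] ℝ)}
    (hw : ∀ k, IsWeakGrad (u k) (g k)) (hu : ∀ k, AEStronglyMeasurable (u k))
    (hg : ∀ k, AEStronglyMeasurable (g k)) (hsu : ∑' k, ∫⁻ y, ‖u k y‖ₑ ≠ ∞)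
    (hsg : ∑' k, ∫⁻ y, ‖g k y‖ₑ ≠ ∞) :
    IsWeakGrad (fun y => ∑' k, u k y) (fun y => ∑' k, g k y) := by
  intro φ hφ hφc v
  have hdφ : Continuous fun y => fderiv ℝ φ y v :=
    (hφ.continuous_fderiv one_ne_zero).clm_apply continuous_const
  obtain ⟨C, hC⟩ := hφ.continuous.bounded_above_of_compact_support hφc
  obtain ⟨D, hD⟩ := hdφ.bounded_above_of_compact_support (hφc.fderiv_apply ℝ v)
  have hgv : ∀ k, AEStronglyMeasurable fun y => g k y v :=
    fun k => (hg k).apply_continuousLinearMap v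
  have hsud : ∑' k, ∫⁻ y, ‖u k y * fderiv ℝ φ y v‖ₑ ≠ ∞ :=
    tsum_lintegral_enorm_ne_top_of_norm_le (C := D) (fun k y => by
      rw [norm_mul, mul_comm]
      gcongr
      exact hD y) hsu
  have hsgv : ∑' k, ∫⁻ y, ‖φ y * g k y v‖ₑ ≠ ∞ :=
    tsum_lintegral_enorm_ne_top_of_norm_le (C := C * ‖v‖) (fun k y => by
      rw [norm_mul, mul_assoc, mul_comm ‖v‖]
      exact mul_le_mul (hC y) ((g k y).le_opNorm v) (norm_nonneg _)
        ((norm_nonneg _).trans (hC y))) hsg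
  calc ∫ y, (∑' k, u k y) * fderiv ℝ φ y v = ∫ y, ∑' k, u k y * fderiv ℝ φ y v := by
        simp only [_root_.tsum_mul_right]
    _ = ∑' k, ∫ y, u k y * fderiv ℝ φ y v :=
        integral_tsum (fun k => (hu k).mul hdφ.aestronglyMeasurable) hsud
    _ = - ∑' k, ∫ y, φ y * g k y v := by simp only [hw _ φ hφ hφc v, tsum_neg]
    _ = - ∫ y, ∑' k, φ y * g k y v := by
        congr 1
        exact (integral_tsum (fun k => hφ.continuous.aestronglyMeasurable.mul (hgv k)) hsgv).symm
    _ = - ∫ y, φ y * (∑' k, g k y) v := by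
        congr 1
        refine integral_congr_ae ?_
        filter_upwards [ae_summable_of_tsum_lintegral_enorm_ne_top hg hsg] with y hy
        rw [_root_.tsum_mul_left]
        congr 1
        exact ((ContinuousLinearMap.apply ℝ ℝ v).map_tsum hy).symm

lemma cap1_le_lintegral {A V : Set (En n)} {u : En n → ℝ} {g : En n → (En n →L[ℝ] ℝ)}
    (hu : Integrable u) (hg : Integrable g) (hw : IsWeakGrad u g) (hV : IsOpen V) (hAV : A ⊆ V)
    (hV1 : ∀ y ∈ V, 1 ≤ u y) : cap1 A ≤ (∫⁻ y, ‖u y‖ₑ) + ∫⁻ y, ‖g y‖ₑ := by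
  have hle : cap1 A ≤ ENNReal.ofReal ((∫ y, ‖u y‖) + ∫ y, ‖g y‖) :=
    sInf_le ⟨u, g, hu, hg.norm, hw, ⟨V, hV, hAV, hV1⟩, rfl⟩
  refine hle.trans ?_
  rw [← ofReal_integral_norm_eq_lintegral_enorm hu, ← ofReal_integral_norm_eq_lintegral_enorm hg]
  exact ENNReal.ofReal_add_le

open Classical in
lemma cap1_le_tsum_lintegral {A : Set (En n)} {V : ℕ → Set (En n)} {u : ℕ → En n → ℝ}
    {g : ℕ → En n → (En n →L[ℝ] ℝ)} (hu : ∀ k, AEStronglyMeasurable (u k))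
    (hg : ∀ k, AEStronglyMeasurable (g k)) (hw : ∀ k, IsWeakGrad (u k) (g k))
    (h0 : ∀ k y, 0 ≤ u k y) (hV : ∀ k, IsOpen (V k)) (hV1 : ∀ k, ∀ y ∈ V k, 1 ≤ u k y)
    (hA : A ⊆ ⋃ k, V k) :
    cap1 A ≤ ∑' k, ((∫⁻ y, ‖u k y‖ₑ) + ∫⁻ y, ‖g k y‖ₑ) := by
  rcases eq_or_ne (∑' k, ((∫⁻ y, ‖u k y‖ₑ) + ∫⁻ y, ‖g k y‖ₑ)) ∞ with htop | htop
  · exact htop ▸ le_top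
  rw [ENNReal.tsum_add] at htop ⊢
  obtain ⟨hsu, hsg⟩ := ENNReal.add_ne_top.1 htop
  -- Off the null set of convergence `tsum` is a junk `0`, so the competitor is set to `1` there.
  set U : En n → ℝ := fun y => if Summable fun k => u k y then ∑' k, u k y else 1
  have hU : (fun y => ∑' k, u k y) =ᵐ[volume] U := by
    filter_upwards [ae_summable_of_tsum_lintegral_enorm_ne_top hu hsu] with y hy
      using (if_pos hy).symm
  have hU1 : ∀ y ∈ ⋃ k, V k, 1 ≤ U y := fun y hy => by
    obtain ⟨k, hk⟩ := mem_iUnion.1 hy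
    simp only [U]
    split_ifs with hsy
    · exact (hV1 k y hk).trans (hsy.le_tsum k fun j _ => h0 j y)
    · exact le_rfl
  calc cap1 A ≤ (∫⁻ y, ‖U y‖ₑ) + ∫⁻ y, ‖∑' k, g k y‖ₑ :=
        cap1_le_lintegral ((integrable_tsum_of_tsum_lintegral_enorm_ne_top hu hsu).congr hU)
          (integrable_tsum_of_tsum_lintegral_enorm_ne_top hg hsg)
          ((isWeakGrad_tsum hw hu hg hsu hsg).congr_ae hU) (isOpen_iUnion hV) hA hU1
    _ = (∫⁻ y, ‖∑' k, u k y‖ₑ) + ∫⁻ y, ‖∑' k, g k y‖ₑ := by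
        congr 1
        exact (lintegral_congr_ae (hU.fun_comp fun t : ℝ => ‖t‖ₑ)).symm
    _ ≤ _ := add_le_add (lintegral_enorm_tsum_le hu) (lintegral_enorm_tsum_le hg)

section SoftTruncation

variable {F : Type*} [NormedAddCommGroup F]

/-- A smooth substitute for `min ‖w‖ 2`, from which competitors for the capacity of superlevel
sets of the norm are built. -/
def softTruncation (w : F) : ℝ := 2 - 2 * (1 + ‖w‖ ^ 2)⁻¹

lemma softTruncation_nonneg (w : F) : 0 ≤ softTruncation w := by
  have : (1 + ‖w‖ ^ 2)⁻¹ ≤ 1 := inv_le_one_of_one_le₀ (by nlinarith [norm_nonneg w])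
  rw [softTruncation]
  linarith

lemma softTruncation_le_norm (w : F) : softTruncation w ≤ ‖w‖ := by
  have heq : softTruncation w = 2 * ‖w‖ ^ 2 / (1 + ‖w‖ ^ 2) := by
    rw [softTruncation]; field_simp; ring
  rw [heq, div_le_iff₀ (by positivity)]
  nlinarith [mul_nonneg (norm_nonneg w) (sq_nonneg (‖w‖ - 1))]

lemma one_lt_softTruncation {w : F} (hw : 1 < ‖w‖) : 1 < softTruncation w := by
  have : (1 + ‖w‖ ^ 2)⁻¹ < 2⁻¹ := inv_strictAnti₀ (by norm_num) (by nlinarith)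
  rw [softTruncation]
  linarith

variable [InnerProductSpace ℝ F]

lemma contDiff_softTruncation {k : ℕ∞} : ContDiff ℝ k (softTruncation (F := F)) :=
  contDiff_const.sub <| contDiff_const.mul <|
    (contDiff_const.add (contDiff_norm_sq ℝ)).inv fun w => by positivity

lemma hasFDerivAt_softTruncation (w : F) :
    HasFDerivAt softTruncation ((4 * ((1 + ‖w‖ ^ 2) ^ 2)⁻¹) • innerSL ℝ w) w := by
  have hsq : HasFDerivAt (fun w : F => 1 + ‖w‖ ^ 2) (2 • innerSL ℝ w) w :=
    (hasStrictFDerivAt_norm_sq w).hasFDerivAt.const_add 1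
  have hinv := (hasDerivAt_inv (by positivity : 1 + ‖w‖ ^ 2 ≠ 0)).comp_hasFDerivAt w hsq
  refine ((hinv.const_mul 2).const_sub 2).congr_fderiv ?_
  ext v
  simp
  ring

lemma norm_fderiv_softTruncation_le (w : F) : ‖fderiv ℝ softTruncation w‖ ≤ 2 := by
  rw [(hasFDerivAt_softTruncation w).fderiv, norm_smul, innerSL_apply_norm,
    Real.norm_of_nonneg (by positivity), mul_assoc, inv_mul_eq_div, ← mul_div_assoc,
    div_le_iff₀ (by positivity)]
  nlinarith [sq_nonneg (‖w‖ - 1), norm_nonneg w, sq_nonneg (‖w‖ ^ 2)]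

end SoftTruncation

lemma exists_cutoff_norm_fderiv_le (E : Type*) [NormedAddCommGroup E] [NormedSpace ℝ E]
    [FiniteDimensional ℝ E] :
    ∃ C : ℝ, 0 ≤ C ∧ ∀ (x : E) (ρ : ℝ), 0 < ρ → ∃ ψ : E → ℝ, ContDiff ℝ 1 ψ ∧
      (∀ y, ψ y ∈ Icc 0 1) ∧ (∀ y ∈ closedBall x ρ, ψ y = 1) ∧
      (∀ y ∉ closedBall x (2 * ρ), ψ y = 0) ∧ ∀ y, ‖fderiv ℝ ψ y‖ ≤ C / ρ := by
  let ψ : ContDiffBump (0 : E) := ⟨1, 2, one_pos, one_lt_two⟩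
  have hψ : ContDiff ℝ 1 ψ := ψ.contDiff
  obtain ⟨C, hC⟩ := (hψ.continuous_fderiv one_ne_zero).bounded_above_of_compact_support
    (ψ.hasCompactSupport.fderiv ℝ)
  have hC0 : 0 ≤ C := (norm_nonneg _).trans (hC 0)
  refine ⟨C, hC0, fun x ρ hρ => ⟨fun y => ψ (ρ⁻¹ • (y - x)),
    hψ.comp ((contDiff_id.sub contDiff_const).const_smul _), fun y => ⟨ψ.nonneg, ψ.le_one⟩,
    fun y hy => ψ.one_of_mem_closedBall ?_, fun y hy => ψ.zero_of_le_dist ?_, fun y => ?_⟩⟩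
  · rw [mem_closedBall, dist_eq_norm] at hy
    rw [mem_closedBall, dist_zero_right, norm_smul, Real.norm_of_nonneg (by positivity),
      inv_mul_eq_div]
    exact (div_le_one hρ).2 hy
  · rw [mem_closedBall, dist_eq_norm, not_le] at hy
    rw [dist_zero_right, norm_smul, Real.norm_of_nonneg (by positivity), inv_mul_eq_div,
      le_div_iff₀ hρ]
    exact hy.le
  · have hS : HasFDerivAt (fun y => ρ⁻¹ • (y - x)) (ρ⁻¹ • ContinuousLinearMap.id ℝ E) y :=
      ((hasFDerivAt_id y).sub_const x).const_smul ρ⁻¹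
    have hcomp : HasFDerivAt (fun y => ψ (ρ⁻¹ • (y - x))) _ y :=
      (hψ.differentiable one_ne_zero _).hasFDerivAt.comp y hS
    rw [hcomp.fderiv]
    refine (ContinuousLinearMap.opNorm_comp_le _ _).trans ?_
    rw [div_eq_mul_inv]
    refine mul_le_mul (hC _) ?_ (norm_nonneg _) hC0
    rw [norm_smul, Real.norm_of_nonneg (by positivity)]
    exact mul_le_of_le_one_right (by positivity) ContinuousLinearMap.norm_id_le

section TruncatedCompetitor

variable {E F : Type*} [NormedAddCommGroup E] [NormedSpace ℝ E]
  [NormedAddCommGroup F] [InnerProductSpace ℝ F] {G : E → F} {ψ : E → ℝ} {D : ℝ}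

lemma norm_fderiv_softTruncation_mul_le (hG : ContDiff ℝ 1 G) (hψ : ContDiff ℝ 1 ψ)
    (hψ01 : ∀ y, ψ y ∈ Icc 0 1) (hD : ∀ y, ‖fderiv ℝ ψ y‖ ≤ D) (y : E) :
    ‖fderiv ℝ (fun y => softTruncation (G y) * ψ y) y‖ ≤ 2 * ‖fderiv ℝ G y‖ + D * ‖G y‖ := by
  have hΦG : HasFDerivAt (fun y => softTruncation (G y)) _ y :=
    ((contDiff_softTruncation (k := 1)).differentiable one_ne_zero (G y)).hasFDerivAt.comp y
      (hG.differentiable one_ne_zero y).hasFDerivAt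
  have hmul : HasFDerivAt (fun y => softTruncation (G y) * ψ y) _ y :=
    hΦG.mul (hψ.differentiable one_ne_zero y).hasFDerivAt
  rw [hmul.fderiv, add_comm]
  refine (norm_add_le _ _).trans (add_le_add ?_ ?_)
  · rw [norm_smul, Real.norm_of_nonneg (hψ01 y).1]
    refine (mul_le_of_le_one_left (norm_nonneg _) (hψ01 y).2).trans ?_
    refine (ContinuousLinearMap.opNorm_comp_le _ _).trans ?_
    gcongr
    exact norm_fderiv_softTruncation_le _
  · rw [norm_smul, Real.norm_of_nonneg (softTruncation_nonneg _), mul_comm]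
    exact mul_le_mul (hD y) (softTruncation_le_norm _) (softTruncation_nonneg _)
      ((norm_nonneg _).trans (hD y))

lemma lintegral_softTruncation_mul_le [MeasurableSpace E] [BorelSpace E] (μ : Measure E)
    {S : Set E} (hS : IsClosed S) (hG : ContDiff ℝ 1 G) (hψ : ContDiff ℝ 1 ψ)
    (hψ01 : ∀ y, ψ y ∈ Icc 0 1) (hψS : ∀ y ∉ S, ψ y = 0) (hD : ∀ y, ‖fderiv ℝ ψ y‖ ≤ D) :
    (∫⁻ y, ‖softTruncation (G y) * ψ y‖ₑ ∂μ) +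
        ∫⁻ y, ‖fderiv ℝ (fun y => softTruncation (G y) * ψ y) y‖ₑ ∂μ ≤
      2 * (∫⁻ y in S, ‖fderiv ℝ G y‖ₑ ∂μ) + (1 + ENNReal.ofReal D) * ∫⁻ y in S, ‖G y‖ₑ ∂μ := by
  set u : E → ℝ := fun y => softTruncation (G y) * ψ y with hu
  have hout : ∀ y ∉ S, u y = 0 := fun y hy => by simp [hu, hψS y hy]
  have hsupp : Function.support u ⊆ S := fun y hy => by_contra fun h => hy (hout y h)
  have hdsupp : Function.support (fderiv ℝ u) ⊆ S :=
    (support_fderiv_subset ℝ).trans (closure_minimal hsupp hS)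
  have hval : ∀ y, ‖u y‖ₑ ≤ ‖G y‖ₑ := fun y => by
    rw [← ofReal_norm, ← ofReal_norm]
    refine ENNReal.ofReal_le_ofReal ?_
    rw [Real.norm_of_nonneg (mul_nonneg (softTruncation_nonneg _) (hψ01 y).1)]
    exact (mul_le_of_le_one_right (softTruncation_nonneg _) (hψ01 y).2).trans
      (softTruncation_le_norm _)
  have hder : ∀ y, ‖fderiv ℝ u y‖ₑ ≤ 2 * ‖fderiv ℝ G y‖ₑ + ENNReal.ofReal D * ‖G y‖ₑ := fun y => by
    have hD0 : 0 ≤ D := (norm_nonneg _).trans (hD y)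
    rw [← ofReal_norm, ← ofReal_norm, ← ofReal_norm, ← ENNReal.ofReal_ofNat 2,
      ← ENNReal.ofReal_mul two_pos.le, ← ENNReal.ofReal_mul hD0,
      ← ENNReal.ofReal_add (by positivity) (by positivity)]
    exact ENNReal.ofReal_le_ofReal (norm_fderiv_softTruncation_mul_le hG hψ hψ01 hD y)
  have hGm : Measurable fun y => ‖G y‖ₑ := hG.continuous.enorm.measurable
  have hdGm : Measurable fun y => ‖fderiv ℝ G y‖ₑ :=
    (hG.continuous_fderiv one_ne_zero).enorm.measurable
  calc (∫⁻ y, ‖u y‖ₑ ∂μ) + ∫⁻ y, ‖fderiv ℝ u y‖ₑ ∂μ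
      = (∫⁻ y in S, ‖u y‖ₑ ∂μ) + ∫⁻ y in S, ‖fderiv ℝ u y‖ₑ ∂μ := by
        congr 1
        · refine (setLIntegral_eq_of_support_subset fun y hy => hsupp ?_).symm
          simpa using hy
        · refine (setLIntegral_eq_of_support_subset fun y hy => hdsupp ?_).symm
          exact fun h => hy (by simp only [h]; rw [← ofReal_norm, norm_zero, ofReal_zero])
    _ ≤ (∫⁻ y in S, ‖G y‖ₑ ∂μ) +
          ∫⁻ y in S, (2 * ‖fderiv ℝ G y‖ₑ + ENNReal.ofReal D * ‖G y‖ₑ) ∂μ :=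
        add_le_add (lintegral_mono hval) (lintegral_mono hder)
    _ = _ := by
        rw [lintegral_add_left (hdGm.const_mul _), lintegral_const_mul _ hdGm,
          lintegral_const_mul _ hGm]
        ring

lemma lintegral_softTruncation_smul_mul_le [MeasurableSpace E] [BorelSpace E] (μ : Measure E)
    {S : Set E} (hS : IsClosed S) (hG : ContDiff ℝ 1 G) (hψ : ContDiff ℝ 1 ψ)
    (hψ01 : ∀ y, ψ y ∈ Icc 0 1) (hψS : ∀ y ∉ S, ψ y = 0) (hD : ∀ y, ‖fderiv ℝ ψ y‖ ≤ D) {s : ℝ}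
    (hs : 0 ≤ s) :
    (∫⁻ y, ‖softTruncation (s • G y) * ψ y‖ₑ ∂μ) +
        ∫⁻ y, ‖fderiv ℝ (fun y => softTruncation (s • G y) * ψ y) y‖ₑ ∂μ ≤
      ENNReal.ofReal s *
        (2 * (∫⁻ y in S, ‖fderiv ℝ G y‖ₑ ∂μ) +
          (1 + ENNReal.ofReal D) * ∫⁻ y in S, ‖G y‖ₑ ∂μ) := by
  have hds : ∀ y, ‖fderiv ℝ (fun y => s • G y) y‖ₑ = ENNReal.ofReal s * ‖fderiv ℝ G y‖ₑ :=
    fun y => by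
      rw [fderiv_fun_const_smul (hG.differentiable one_ne_zero y), ← ofReal_norm, ← ofReal_norm,
        norm_smul, Real.norm_of_nonneg hs, ENNReal.ofReal_mul hs]
  refine (lintegral_softTruncation_mul_le μ hS (hG.const_smul s) hψ hψ01 hψS hD).trans_eq ?_
  simp only [hds, enorm_smul, Real.enorm_of_nonneg hs]
  rw [lintegral_const_mul' _ _ ENNReal.ofReal_ne_top,
    lintegral_const_mul' _ _ ENNReal.ofReal_ne_top]
  ring

end TruncatedCompetitor

lemma one_lt_norm_smul_of_annulus {E F : Type*} [NormedAddCommGroup E] [NormedAddCommGroup F]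
    [NormedSpace ℝ F] {x y : E} {a b : F} {ρ ε : ℝ} (hρ : 0 < ρ) (hε : 0 < ε)
    (hy : ρ / 2 < ‖y - x‖) (ha : ε * ‖y - x‖ ≤ ‖a‖) (hab : ‖b - a‖ ≤ ε * ρ / 4) :
    1 < ‖(8 / (ε * ρ)) • b‖ := by
  rw [norm_smul, Real.norm_of_nonneg (by positivity), div_mul_eq_mul_div,
    lt_div_iff₀ (by positivity)]
  have hsub : ‖a‖ - ‖b‖ ≤ ‖b - a‖ := norm_sub_rev a b ▸ norm_sub_norm_le a b
  have hmul : ε * (ρ / 2) ≤ ε * ‖y - x‖ := by gcongr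
  have hpos : 0 < ε * ρ := by positivity
  linarith

section SmoothApprox

variable {E F : Type*} [NormedAddCommGroup E] [NormedSpace ℝ E] [MeasurableSpace E]
  [NormedAddCommGroup F]

/-- `h` is, on the ball of radius `ρ` around `x`, a uniform limit of `C¹` maps whose size and
derivative have mean at most `2 * ρ * M` and `M` on the ball of twice the radius. -/
def HasSmoothApprox [NormedSpace ℝ F] (μ : Measure E) (h : E → F) (x : E) (ρ : ℝ) (M : ℝ≥0∞) :
    Prop :=
  ∀ τ > 0, ∃ H : E → F, ContDiff ℝ 1 H ∧ (∀ y ∈ closedBall x ρ, ‖H y - h y‖ ≤ τ) ∧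
    ∫⁻ y in closedBall x (2 * ρ), ‖fderiv ℝ H y‖ₑ ∂μ ≤ M * μ (closedBall x (2 * ρ)) ∧
    ∫⁻ y in closedBall x (2 * ρ), ‖H y‖ₑ ∂μ ≤
      ENNReal.ofReal (2 * ρ) * (M * μ (closedBall x (2 * ρ)))

lemma exists_annulus_competitor [FiniteDimensional ℝ E] [BorelSpace E] [InnerProductSpace ℝ F]
    (μ : Measure E) : ∃ C : ℝ≥0∞, C ≠ ∞ ∧ ∀ (h : E → F) (x : E) (ρ ε : ℝ) (M : ℝ≥0∞),
      0 < ρ → ρ ≤ 1 → 0 < ε → HasSmoothApprox μ h x ρ M → ∃ u : E → ℝ, ContDiff ℝ 1 u ∧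
        (∀ y, 0 ≤ u y) ∧
        (∀ y ∈ closedBall x ρ, ρ / 2 < ‖y - x‖ → ε * ‖y - x‖ ≤ ‖h y‖ → 1 < u y) ∧
        (∫⁻ y, ‖u y‖ₑ ∂μ) + ∫⁻ y, ‖fderiv ℝ u y‖ₑ ∂μ ≤
          C * ENNReal.ofReal ε⁻¹ * M * (ENNReal.ofReal ρ⁻¹ * μ (closedBall x (2 * ρ))) := by
  obtain ⟨D, hD0, hcutoff⟩ := exists_cutoff_norm_fderiv_le E
  refine ⟨ENNReal.ofReal (8 * (4 + 2 * D)), ENNReal.ofReal_ne_top,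
    fun h x ρ ε M hρ hρ1 hε happrox => ?_⟩
  obtain ⟨ψ, hψ, hψ01, hψ1, hψ0, hψD⟩ := hcutoff x ρ hρ
  obtain ⟨H, hH, hHh, hHd, hHi⟩ := happrox (ε * ρ / 4) (by positivity)
  set s : ℝ := 8 / (ε * ρ) with hs
  have hs0 : 0 < s := by positivity
  refine ⟨fun y => softTruncation (s • H y) * ψ y,
    (contDiff_softTruncation.comp (hH.const_smul s)).mul hψ,
    fun y => mul_nonneg (softTruncation_nonneg _) (hψ01 y).1, fun y hy hyρ hyε => ?_, ?_⟩
  · simp only [hψ1 y hy, mul_one]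
    exact one_lt_softTruncation (one_lt_norm_smul_of_annulus hρ hε hyρ hyε (hHh y hy))
  generalize hN : M * μ (closedBall x (2 * ρ)) = N at hHd hHi
  calc _ ≤ ENNReal.ofReal s * (2 * (∫⁻ y in closedBall x (2 * ρ), ‖fderiv ℝ H y‖ₑ ∂μ) +
          (1 + ENNReal.ofReal (D / ρ)) * ∫⁻ y in closedBall x (2 * ρ), ‖H y‖ₑ ∂μ) :=
        lintegral_softTruncation_smul_mul_le μ isClosed_closedBall hH hψ hψ01 hψ0 hψD hs0.le
    _ ≤ ENNReal.ofReal s *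
          (2 * N + (1 + ENNReal.ofReal (D / ρ)) * (ENNReal.ofReal (2 * ρ) * N)) := by gcongr
    _ = ENNReal.ofReal (s * (2 + (1 + D / ρ) * (2 * ρ))) * N := by
        rw [← ENNReal.ofReal_ofNat 2, ← ENNReal.ofReal_one, ← ENNReal.ofReal_add one_pos.le
          (by positivity), ← mul_assoc, ← ENNReal.ofReal_mul (by positivity), ← add_mul,
          ← ENNReal.ofReal_add two_pos.le (by positivity), ← mul_assoc, ← ENNReal.ofReal_mul hs0.le]
    _ ≤ ENNReal.ofReal (8 * (4 + 2 * D) * ε⁻¹ * ρ⁻¹) * N := by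
        refine mul_le_mul_left (ENNReal.ofReal_le_ofReal ?_) N
        calc s * (2 + (1 + D / ρ) * (2 * ρ)) = s * (2 + 2 * ρ + 2 * D) := by field_simp; ring
          _ ≤ s * (4 + 2 * D) := by gcongr; linarith
          _ = 8 * (4 + 2 * D) * ε⁻¹ * ρ⁻¹ := by rw [hs]; field_simp
    _ = _ := by
        rw [ENNReal.ofReal_mul (by positivity), ENNReal.ofReal_mul (by positivity), ← hN]
        ring

end SmoothApprox

lemma exists_dyadic_annulus {s r : ℝ} (hs : 0 < s) (hsr : s ≤ r) :
    ∃ k : ℕ, r * (1 / 2) ^ k / 2 < s ∧ s ≤ r * (1 / 2) ^ k := by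
  have hr : 0 < r := hs.trans_le hsr
  obtain ⟨k, hk1, hk2⟩ := exists_nat_pow_near_of_lt_one (x := s / r) (y := (1 / 2 : ℝ))
    (by positivity) ((div_le_one hr).2 hsr) (by norm_num) (by norm_num)
  rw [lt_div_iff₀ hr, pow_succ] at hk1
  rw [div_le_iff₀ hr] at hk2
  exact ⟨k, by linarith, by linarith⟩

lemma ofReal_inv_mul_volume_closedBall_le (hn : 2 ≤ n) (x : En n) {r : ℝ} (hr : 0 < r) (k : ℕ) :
    ENNReal.ofReal (r * (1 / 2) ^ k)⁻¹ * volume (closedBall x (2 * (r * (1 / 2) ^ k))) ≤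
      2 ^ n * volume (ball (0 : En n) 1) * ENNReal.ofReal (r ^ (n - 1)) * 2⁻¹ ^ k := by
  obtain ⟨m, rfl⟩ : ∃ m, n = m + 2 := ⟨n - 2, by omega⟩
  have hkr : (r * (1 / 2) ^ k) ^ (m + 1) ≤ r ^ (m + 1) * (1 / 2) ^ k := by
    rw [mul_pow, pow_succ ((1 / 2 : ℝ) ^ k) m]
    gcongr
    exact mul_le_of_le_one_left (by positivity)
      (pow_le_one₀ (by positivity) (pow_le_one₀ (by norm_num) (by norm_num)))
  have hpow : (r * (1 / 2) ^ k)⁻¹ * (2 * (r * (1 / 2) ^ k)) ^ (m + 2) =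
      2 ^ (m + 2) * (r * (1 / 2) ^ k) ^ (m + 1) := by
    field_simp
    ring
  have hhalf : (2⁻¹ : ℝ≥0∞) ^ k = ENNReal.ofReal ((1 / 2) ^ k) := by
    rw [ENNReal.ofReal_pow (by norm_num), one_div, ENNReal.ofReal_inv_of_pos two_pos,
      ENNReal.ofReal_ofNat]
  calc _ = ENNReal.ofReal (2 ^ (m + 2) * (r * (1 / 2) ^ k) ^ (m + 1)) *
        volume (ball (0 : En (m + 2)) 1) := by
        rw [Measure.addHaar_closedBall _ _ (by positivity), finrank_euclideanSpace_fin,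
          ← mul_assoc, ← ENNReal.ofReal_mul (by positivity), hpow]
    _ ≤ ENNReal.ofReal (2 ^ (m + 2) * (r ^ (m + 1) * (1 / 2) ^ k)) *
        volume (ball (0 : En (m + 2)) 1) := by gcongr
    _ = _ := by
        rw [ENNReal.ofReal_mul (by positivity), ENNReal.ofReal_mul (by positivity), hhalf,
          ENNReal.ofReal_pow two_pos.le, ENNReal.ofReal_ofNat, Nat.add_succ_sub_one]
        ring

lemma exists_cap1_superlevel_le {F : Type*} [NormedAddCommGroup F] [InnerProductSpace ℝ F]
    (hn : 2 ≤ n) : ∃ C : ℝ≥0∞, C ≠ ∞ ∧ ∀ (h : En n → F) (x : En n) (r ε : ℝ) (M : ℝ≥0∞),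
      0 < r → r ≤ 1 → 0 < ε → (∀ ρ ∈ Ioc 0 r, HasSmoothApprox volume h x ρ M) →
        cap1 ({y | y ≠ x ∧ ε * ‖y - x‖ ≤ ‖h y‖} ∩ ball x r) ≤
          C * ENNReal.ofReal ε⁻¹ * M * ENNReal.ofReal (r ^ (n - 1)) := by
  obtain ⟨C, hC, hcomp⟩ := exists_annulus_competitor (F := F) (volume : Measure (En n))
  refine ⟨C * (2 ^ n * volume (ball (0 : En n) 1)) * 2, by
    have := measure_ball_lt_top (μ := volume) (x := (0 : En n)) (r := 1)
    finiteness,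
    fun h x r ε M hr hr1 hε happrox => ?_⟩
  set ρ : ℕ → ℝ := fun k => r * (1 / 2) ^ k
  have hρ0 : ∀ k, 0 < ρ k := fun k => by positivity
  have hρr : ∀ k, ρ k ≤ r := fun k =>
    mul_le_of_le_one_right hr.le (pow_le_one₀ (by norm_num) (by norm_num))
  choose u hu hu0 hu1 hle using fun k =>
    hcomp h x (ρ k) ε M (hρ0 k) ((hρr k).trans hr1) hε (happrox _ ⟨hρ0 k, hρr k⟩)
  have hcover : {y | y ≠ x ∧ ε * ‖y - x‖ ≤ ‖h y‖} ∩ ball x r ⊆ ⋃ k, {y | 1 < u k y} := by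
    rintro y ⟨⟨hyx, hy⟩, hyr⟩
    rw [mem_ball, dist_eq_norm] at hyr
    obtain ⟨k, hk1, hk2⟩ := exists_dyadic_annulus (norm_pos_iff.2 (sub_ne_zero.2 hyx)) hyr.le
    exact mem_iUnion.2 ⟨k, hu1 k y (by rwa [mem_closedBall, dist_eq_norm]) hk1 hy⟩
  calc cap1 ({y | y ≠ x ∧ ε * ‖y - x‖ ≤ ‖h y‖} ∩ ball x r)
      ≤ ∑' k, ((∫⁻ y, ‖u k y‖ₑ) + ∫⁻ y, ‖fderiv ℝ (u k) y‖ₑ) :=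
        cap1_le_tsum_lintegral (fun k => (hu k).continuous.aestronglyMeasurable)
          (fun k => ((hu k).continuous_fderiv one_ne_zero).aestronglyMeasurable)
          (fun k => isWeakGrad_fderiv (hu k)) hu0
          (fun k => isOpen_lt continuous_const (hu k).continuous) (fun k y hy => le_of_lt hy) hcover
    _ ≤ ∑' k, C * ENNReal.ofReal ε⁻¹ * M * (2 ^ n * volume (ball (0 : En n) 1) *
          ENNReal.ofReal (r ^ (n - 1)) * 2⁻¹ ^ k) := ENNReal.tsum_le_tsum fun k =>
        (hle k).trans (mul_le_mul_right (ofReal_inv_mul_volume_closedBall_le hn x hr k) _)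
    _ = _ := by
        rw [ENNReal.tsum_mul_left, ENNReal.tsum_mul_left, ENNReal.tsum_geometric,
          ENNReal.one_sub_inv_two, inv_inv]
        ring

lemma integrableOn_smul_of_tsupport_subset {E F : Type*} [TopologicalSpace E] [T2Space E]
    [MeasurableSpace E] [OpensMeasurableSpace E] [NormedAddCommGroup F] [NormedSpace ℝ F]
    {μ : Measure E} {Ω : Set E} {φ : E → ℝ} {f : E → F} (hφ : Continuous φ)
    (hφc : HasCompactSupport φ) (hφΩ : tsupport φ ⊆ Ω) (hf : LocallyIntegrableOn f Ω μ) :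
    IntegrableOn (fun y => φ y • f y) Ω μ := by
  have hsupp : Function.support (fun y => φ y • f y) ⊆ tsupport φ :=
    (Function.support_smul_subset_left φ f).trans subset_closure
  have hcpt : IntegrableOn (fun y => φ y • f y) (tsupport φ) μ :=
    (hf.integrableOn_compact_subset hφΩ hφc).continuousOn_smul hφ.continuousOn hφc
  exact ((integrableOn_iff_integrable_of_support_subset hsupp).1 hcpt).integrableOn

section WeakLineDeriv

variable {E F : Type*} [NormedAddCommGroup E] [NormedSpace ℝ E] [MeasurableSpace E]
  [NormedAddCommGroup F] [NormedSpace ℝ F] {μ : Measure E} {Ω : Set E} {v : E} {f w : E → F}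

/-- `w` is the weak derivative of `f` on `Ω` in the direction `v`, tested against `C¹` functions
with compact support in `Ω`. -/
def HasWeakLineDerivOn (μ : Measure E) (f w : E → F) (v : E) (Ω : Set E) : Prop :=
  ∀ φ : E → ℝ, ContDiff ℝ 1 φ → HasCompactSupport φ → tsupport φ ⊆ Ω →
    ∫ y in Ω, (fderiv ℝ φ y v) • f y ∂μ = - ∫ y in Ω, φ y • w y ∂μ

lemma HasWeakGradOn.hasWeakLineDerivOn {Ω : Set (En n)} {f : En n → En n}
    {g : En n → (En n →L[ℝ] En n)} (h : HasWeakGradOn f g Ω) (v : En n) :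
    HasWeakLineDerivOn volume f (fun y => g y v) v Ω :=
  fun φ hφ hφc hφΩ => h φ hφ hφc hφΩ v

lemma HasWeakLineDerivOn.sub [OpensMeasurableSpace E] {f' w' : E → F}
    (h : HasWeakLineDerivOn μ f w v Ω)
    (h' : HasWeakLineDerivOn μ f' w' v Ω) (hf : LocallyIntegrableOn f Ω μ)
    (hf' : LocallyIntegrableOn f' Ω μ) (hw : LocallyIntegrableOn w Ω μ)
    (hw' : LocallyIntegrableOn w' Ω μ) :
    HasWeakLineDerivOn μ (fun y => f y - f' y) (fun y => w y - w' y) v Ω := by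
  intro φ hφ hφc hφΩ
  have hdφ : Continuous fun y => fderiv ℝ φ y v :=
    (hφ.continuous_fderiv one_ne_zero).clm_apply continuous_const
  have hdφΩ : tsupport (fun y => fderiv ℝ φ y v) ⊆ Ω :=
    (tsupport_fderiv_apply_subset ℝ v).trans hφΩ
  have hdφc : HasCompactSupport fun y => fderiv ℝ φ y v := hφc.fderiv_apply ℝ v
  simp only [smul_sub]
  rw [integral_sub (integrableOn_smul_of_tsupport_subset hdφ hdφc hdφΩ hf)
      (integrableOn_smul_of_tsupport_subset hdφ hdφc hdφΩ hf'),
    integral_sub (integrableOn_smul_of_tsupport_subset hφ.continuous hφc hφΩ hw)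
      (integrableOn_smul_of_tsupport_subset hφ.continuous hφc hφΩ hw'),
    h φ hφ hφc hφΩ, h' φ hφ hφc hφΩ]
  abel

lemma hasWeakLineDerivOn_fderiv [BorelSpace E] [FiniteDimensional ℝ E] [μ.IsAddHaarMeasure]
    (hf : ContDiff ℝ 1 f) (v : E) (Ω : Set E) :
    HasWeakLineDerivOn μ f (fun y => fderiv ℝ f y v) v Ω := by
  intro φ hφ hφc hφΩ
  have hdφ : Continuous fun y => fderiv ℝ φ y v :=
    (hφ.continuous_fderiv one_ne_zero).clm_apply continuous_const
  have hdf : Continuous fun y => fderiv ℝ f y v :=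
    (hf.continuous_fderiv one_ne_zero).clm_apply continuous_const
  have hφ0 : ∀ y ∉ Ω, φ y = 0 := fun y hy => image_eq_zero_of_notMem_tsupport fun h => hy (hφΩ h)
  have hdφ0 : ∀ y ∉ Ω, fderiv ℝ φ y v = 0 := fun y hy =>
    image_eq_zero_of_notMem_tsupport (f := fun y => fderiv ℝ φ y v)
      fun h => hy (hφΩ (tsupport_fderiv_apply_subset ℝ v h))
  rw [setIntegral_eq_integral_of_forall_compl_eq_zero fun y hy => by rw [hdφ0 y hy, zero_smul],
    setIntegral_eq_integral_of_forall_compl_eq_zero fun y hy => by rw [hφ0 y hy, zero_smul],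
    eq_comm, neg_eq_iff_eq_neg]
  exact integral_smul_fderiv_eq_neg_fderiv_smul_of_integrable
    ((hdφ.smul hf.continuous).integrable_of_hasCompactSupport
      (hφc.fderiv_apply ℝ v).smul_right)
    ((hφ.continuous.smul hdf).integrable_of_hasCompactSupport hφc.smul_right)
    ((hφ.continuous.smul hf.continuous).integrable_of_hasCompactSupport hφc.smul_right)
    (fun y _ => hφ.differentiable one_ne_zero y) fun y _ => hf.differentiable one_ne_zero y

lemma HasWeakLineDerivOn.fderiv_convolution_apply [BorelSpace E] [FiniteDimensional ℝ E]
    [μ.IsAddHaarMeasure] [CompleteSpace F] {S : Set E} (hw : HasWeakLineDerivOn μ f w v Ω)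
    (hΩ : MeasurableSet Ω) (hS : MeasurableSet S) (hSΩ : S ⊆ Ω) (hf : IntegrableOn f S μ)
    {k : E → ℝ} (hk : ContDiff ℝ 1 k) (hkc : HasCompactSupport k) {z : E}
    (hz : tsupport (fun y => k (z - y)) ⊆ S) :
    fderiv ℝ (convolution k (S.indicator f) (ContinuousLinearMap.lsmul ℝ ℝ) μ) z v =
      ∫ y in Ω, k (z - y) • w y ∂μ := by
  have hF : LocallyIntegrable (S.indicator f) μ :=
    ((integrable_indicator_iff hS).2 hf).locallyIntegrable
  have hconv := (hkc.fderiv ℝ).convolutionExists_left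
    ((ContinuousLinearMap.lsmul ℝ ℝ : ℝ →L[ℝ] F →L[ℝ] F).precompL E)
    (hk.continuous_fderiv one_ne_zero) hF z
  set φ : E → ℝ := fun y => k (z - y)
  have hφ : ContDiff ℝ 1 φ := hk.comp (contDiff_const.sub contDiff_id)
  have hφc : HasCompactSupport φ := hkc.comp_homeomorph (Homeomorph.subLeft z)
  have hdφ : ∀ y, fderiv ℝ φ y v = - fderiv ℝ k (z - y) v := fun y => by
    have hchain : HasFDerivAt φ _ y := (hk.differentiable one_ne_zero (z - y)).hasFDerivAt.comp y
      ((hasFDerivAt_id y).const_sub z)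
    rw [hchain.fderiv]
    simp
  have hdφ0 : ∀ y ∉ S, fderiv ℝ φ y = 0 := fun y hy =>
    by_contra fun h => hy (hz (support_fderiv_subset ℝ h))
  calc fderiv ℝ (convolution k (S.indicator f) (ContinuousLinearMap.lsmul ℝ ℝ) μ) z v
      = ∫ t, (fderiv ℝ k t v) • S.indicator f (z - t) ∂μ := by
        rw [(hkc.hasFDerivAt_convolution_left _ hk hF z).fderiv, convolution_def,
          ContinuousLinearMap.integral_apply hconv]
        rfl
    _ = ∫ y, (fderiv ℝ k (z - y) v) • S.indicator f y ∂μ := by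
        rw [← integral_sub_left_eq_self _ μ z]
        simp only [_root_.sub_sub_cancel]
    _ = - ∫ y in Ω, (fderiv ℝ φ y v) • f y ∂μ := by
        rw [← integral_neg, ← integral_indicator hΩ]
        congr 1 with y
        by_cases hy : y ∈ S
        · rw [indicator_of_mem hy, indicator_of_mem (hSΩ hy), hdφ, neg_smul, neg_neg]
        · rw [indicator_of_notMem hy, smul_zero, eq_comm, indicator_apply_eq_zero]
          intro _
          rw [hdφ0 y hy, zero_apply, zero_smul, neg_zero]
    _ = ∫ y in Ω, k (z - y) • w y ∂μ := by
        rw [hw φ hφ hφc (hz.trans hSΩ), neg_neg]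

lemma enorm_fderiv_convolution_le [BorelSpace E] [FiniteDimensional ℝ E] [μ.IsAddHaarMeasure]
    [CompleteSpace F] {S : Set E} {g : E → E →L[ℝ] F}
    (hg : ∀ v, HasWeakLineDerivOn μ f (fun y => g y v) v Ω)
    (hΩ : MeasurableSet Ω) (hS : MeasurableSet S) (hSΩ : S ⊆ Ω) (hf : IntegrableOn f S μ)
    {k : E → ℝ} (hk : ContDiff ℝ 1 k) (hkc : HasCompactSupport k) {z : E}
    (hz : tsupport (fun y => k (z - y)) ⊆ S) :
    ‖fderiv ℝ (convolution k (S.indicator f) (ContinuousLinearMap.lsmul ℝ ℝ) μ) z‖ₑ ≤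
      ∫⁻ y, ‖k (z - y)‖ₑ * S.indicator (fun y => ‖g y‖ₑ) y ∂μ := by
  refine ContinuousLinearMap.opENorm_le_bound _ fun v => ?_
  rw [(hg v).fderiv_convolution_apply hΩ hS hSΩ hf hk hkc hz,
    ← lintegral_mul_const' _ _ enorm_ne_top]
  refine (enorm_integral_le_lintegral_enorm _).trans ?_
  rw [← lintegral_indicator hΩ]
  refine lintegral_mono fun y => indicator_apply_le' (fun _ => ?_) fun _ => zero_le
  by_cases hy : y ∈ S
  · rw [indicator_of_mem hy, enorm_smul, mul_assoc]
    gcongr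
    exact ContinuousLinearMap.le_opENorm _ _
  · have : k (z - y) = 0 := image_eq_zero_of_notMem_tsupport (f := fun y => k (z - y))
      fun h => hy (hz h)
    simp [this]

end WeakLineDeriv

lemma mem_closedBall_add_of_sub_ne_zero {E : Type*} [SeminormedAddCommGroup E] {x z : E}
    {K : E → ℝ≥0∞} {δ s : ℝ} (hK : ∀ y ∉ closedBall 0 δ, K y = 0) (hz : z ∈ closedBall x s) {y : E}
    (hy : K (z - y) ≠ 0) : y ∈ closedBall x (s + δ) := by
  have hzy : z - y ∈ closedBall 0 δ := by_contra fun h => hy (hK _ h)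
  rw [mem_closedBall, dist_zero_right, ← dist_eq_norm] at hzy
  rw [mem_closedBall] at hz ⊢
  linarith [dist_triangle_left y x z]

section KernelAverages

variable {E : Type*} [NormedAddCommGroup E] [MeasurableSpace E] {μ : Measure E} {x z : E}
  {N K : E → ℝ≥0∞} {δ s : ℝ}

lemma lintegral_mul_comp_sub_le [OpensMeasurableSpace E] (hK : ∀ y ∉ closedBall 0 δ, K y = 0)
    {c : ℝ≥0∞} (hKc : ∀ y, K y ≤ c) (hN : AEMeasurable N μ) (hz : z ∈ closedBall x s) :
    ∫⁻ y, K (z - y) * N y ∂μ ≤ c * ∫⁻ y in closedBall x (s + δ), N y ∂μ := by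
  rw [← lintegral_const_mul'' _ hN.restrict, ← lintegral_indicator measurableSet_closedBall]
  refine lintegral_mono fun y => ?_
  by_cases hy : y ∈ closedBall x (s + δ)
  · rw [indicator_of_mem hy]
    gcongr
    exact hKc _
  · rw [of_not_not fun h => hy (mem_closedBall_add_of_sub_ne_zero hK hz h), zero_mul]
    exact zero_le

variable [BorelSpace E] [SecondCountableTopology E] [SFinite μ] [μ.IsAddLeftInvariant]

lemma setLIntegral_lintegral_mul_comp_sub_le (hK : ∀ y ∉ closedBall 0 δ, K y = 0)
    (hKm : Measurable K) (hK1 : ∫⁻ y, K y ∂μ = 1) (hN : AEMeasurable N μ) :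
    ∫⁻ z in closedBall x s, ∫⁻ y, K (z - y) * N y ∂μ ∂μ ≤
      ∫⁻ y in closedBall x (s + δ), N y ∂μ := by
  rw [lintegral_lintegral_swap ((hKm.comp measurable_sub).aemeasurable.mul
      (hN.comp_quasiMeasurePreserving Measure.quasiMeasurePreserving_snd)),
    ← lintegral_indicator measurableSet_closedBall]
  refine lintegral_mono fun y => ?_
  by_cases hy : y ∈ closedBall x (s + δ)
  · rw [indicator_of_mem hy, lintegral_mul_const _ (by fun_prop)]
    refine mul_le_of_le_one_left zero_le ((setLIntegral_le_lintegral _ _).trans_eq ?_)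
    rw [lintegral_sub_right_eq_self K, hK1]
  · rw [indicator_of_notMem hy, nonpos_iff_eq_zero]
    refine setLIntegral_eq_zero measurableSet_closedBall fun z hz => ?_
    rw [of_not_not fun h => hy (mem_closedBall_add_of_sub_ne_zero hK hz h), zero_mul,
      Pi.zero_apply]

end KernelAverages

lemma setLIntegral_lintegral_mul_comp_sub_le_of_average_le {E : Type*} [NormedAddCommGroup E]
    [NormedSpace ℝ E] [FiniteDimensional ℝ E] [MeasurableSpace E] [BorelSpace E] {μ : Measure E}
    [μ.IsAddHaarMeasure] {x : E} {N K : E → ℝ≥0∞} {δ s R : ℝ} {η : ℝ≥0∞} (hδ : 0 < δ) (hs : 0 < s)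
    (hK : ∀ y ∉ closedBall 0 δ, K y = 0) (hKm : Measurable K) (hK1 : ∫⁻ y, K y ∂μ = 1)
    (hKc : ∀ y, K y ≤ (μ (closedBall 0 (δ / 2)))⁻¹) (hN : AEMeasurable N μ)
    (hNη : ∀ ρ ∈ Ioc 0 R, ∫⁻ y in closedBall x ρ, N y ∂μ ≤ η * μ (closedBall x ρ))
    (hR : s + δ ≤ R) :
    ∫⁻ z in closedBall x s, ∫⁻ y, K (z - y) * N y ∂μ ∂μ ≤
      4 ^ Module.finrank ℝ E * η * μ (closedBall x s) := by
  have hscale : ∀ c : ℝ, 0 ≤ c → μ (closedBall x (4 * c)) =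
      4 ^ Module.finrank ℝ E * μ (closedBall 0 c) := fun c hc => by
    rw [Measure.addHaar_closedBall_mul _ _ (by norm_num) hc, ENNReal.ofReal_pow (by norm_num),
      ENNReal.ofReal_ofNat]
  have hNsδ : ∫⁻ y in closedBall x (s + δ), N y ∂μ ≤ η * μ (closedBall x (s + δ)) :=
    hNη _ ⟨by positivity, hR⟩
  rcases le_or_gt δ s with hsδ | hsδ
  · calc _ ≤ ∫⁻ y in closedBall x (s + δ), N y ∂μ :=
          setLIntegral_lintegral_mul_comp_sub_le hK hKm hK1 hN
      _ ≤ η * μ (closedBall x (4 * s)) := by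
          refine hNsδ.trans ?_
          gcongr
          linarith
      _ = _ := by
          rw [hscale s hs.le, Measure.addHaar_closedBall_center μ x]
          ring
  · have hpt : ∀ z ∈ closedBall x s, ∫⁻ y, K (z - y) * N y ∂μ ≤
        4 ^ Module.finrank ℝ E * η := fun z hz =>
      calc _ ≤ (μ (closedBall 0 (δ / 2)))⁻¹ * ∫⁻ y in closedBall x (s + δ), N y ∂μ :=
            lintegral_mul_comp_sub_le hK hKc hN hz
        _ ≤ (μ (closedBall 0 (δ / 2)))⁻¹ * (η * μ (closedBall x (4 * (δ / 2)))) := by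
            refine mul_le_mul_right (hNsδ.trans ?_) _
            gcongr
            linarith
        _ = 4 ^ Module.finrank ℝ E * η *
              ((μ (closedBall 0 (δ / 2)))⁻¹ * μ (closedBall 0 (δ / 2))) := by
            rw [hscale _ (by positivity)]
            ring
        _ = _ := by
            rw [ENNReal.inv_mul_cancel (measure_closedBall_pos μ _ (by positivity)).ne'
              measure_closedBall_lt_top.ne, mul_one]
    exact (setLIntegral_mono measurable_const hpt).trans_eq (setLIntegral_const _ _)

section BumpKernel

variable {E : Type*} [NormedAddCommGroup E] [NormedSpace ℝ E] [FiniteDimensional ℝ E]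
  [MeasurableSpace E] [BorelSpace E] (μ : Measure E) [μ.IsAddHaarMeasure]

lemma lintegral_enorm_normed_contDiffBump (φ : ContDiffBump (0 : E)) :
    ∫⁻ y, ‖φ.normed μ y‖ₑ ∂μ = 1 := by
  have hint : Integrable (φ.normed μ) μ :=
    φ.continuous_normed.integrable_of_hasCompactSupport φ.hasCompactSupport_normed
  rw [← ofReal_integral_norm_eq_lintegral_enorm hint]
  simp only [Real.norm_of_nonneg (φ.nonneg_normed _), φ.integral_normed, ENNReal.ofReal_one]

lemma enorm_normed_contDiffBump_le (φ : ContDiffBump (0 : E)) (y : E) :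
    ‖φ.normed μ y‖ₑ ≤ (μ (closedBall 0 φ.rIn))⁻¹ := by
  have hpos : 0 < μ.real (closedBall (0 : E) φ.rIn) :=
    ENNReal.toReal_pos (measure_closedBall_pos μ _ φ.rIn_pos).ne' measure_closedBall_lt_top.ne
  rw [Real.enorm_of_nonneg (φ.nonneg_normed _)]
  refine (ENNReal.ofReal_le_ofReal (φ.normed_le_div_measure_closedBall_rIn μ y)).trans_eq ?_
  rw [one_div, ENNReal.ofReal_inv_of_pos hpos, ofReal_measureReal measure_closedBall_lt_top.ne]

lemma normed_contDiffBump_eq_zero {φ : ContDiffBump (0 : E)} {y : E}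
    (hy : y ∉ closedBall 0 φ.rOut) : φ.normed μ y = 0 :=
  by_contra fun h => hy (ball_subset_closedBall (φ.support_normed_eq (μ := μ) ▸ h))

lemma tsupport_normed_contDiffBump_sub_subset (φ : ContDiffBump (0 : E)) (z : E) :
    tsupport (fun y => φ.normed μ (z - y)) ⊆ closedBall z φ.rOut := by
  refine closure_minimal (fun y hy => ?_) isClosed_closedBall
  by_contra hyz
  refine hy (normed_contDiffBump_eq_zero μ fun h => hyz ?_)
  rwa [mem_closedBall, dist_zero_right, ← dist_eq_norm, dist_comm, ← mem_closedBall] at h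

lemma exists_forall_dist_normed_convolution_le {F : Type*} [NormedAddCommGroup F]
    [NormedSpace ℝ F] [CompleteSpace F] {f : E → F} {x : E} {R ρ τ : ℝ}
    (hf : ContinuousOn f (closedBall x R)) (hρR : ρ < R) (hτ : 0 < τ) :
    ∃ δ > 0, ∀ φ : ContDiffBump (0 : E), φ.rOut ≤ δ → ∀ y ∈ closedBall x ρ,
      ‖convolution (φ.normed μ) ((closedBall x R).indicator f)
        (ContinuousLinearMap.lsmul ℝ ℝ) μ y - f y‖ ≤ τ := by
  have hS : IsCompact (closedBall x R) := isCompact_closedBall x R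
  obtain ⟨δ, hδ, hunif⟩ := Metric.uniformContinuousOn_iff.1
    (hS.uniformContinuousOn_of_continuous hf) τ hτ
  refine ⟨min δ (R - ρ), lt_min hδ (by linarith), fun φ hφ y hy => ?_⟩
  have hyR : y ∈ closedBall x R := closedBall_subset_closedBall hρR.le hy
  have hfR : Integrable ((closedBall x R).indicator f) μ :=
    (integrable_indicator_iff measurableSet_closedBall).2 (hf.integrableOn_compact hS)
  have hclose : ∀ u ∈ ball y φ.rOut, dist ((closedBall x R).indicator f u)
      ((closedBall x R).indicator f y) ≤ τ := fun u hu => by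
    have huy : dist u y < min δ (R - ρ) := (mem_ball.1 hu).trans_le hφ
    have huR : u ∈ closedBall x R := by
      rw [mem_closedBall] at hy ⊢
      linarith [dist_triangle u y x, min_le_right δ (R - ρ)]
    rw [indicator_of_mem huR, indicator_of_mem hyR]
    exact (hunif u huR y hyR (huy.trans_le (min_le_left _ _))).le
  have hdist := φ.dist_normed_convolution_le hfR.aestronglyMeasurable hclose
  rwa [indicator_of_mem hyR, dist_eq_norm] at hdist

end BumpKernel

lemma enorm_sub_le_mul_lintegral_enorm_fderiv {E F : Type*} [NormedAddCommGroup E]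
    [NormedSpace ℝ E] [NormedAddCommGroup F] [NormedSpace ℝ F] [CompleteSpace F] {H : E → F}
    (hH : ContDiff ℝ 1 H) (x y : E) :
    ‖H y - H x‖ₑ ≤ ‖y - x‖ₑ * ∫⁻ t in Ioc (0 : ℝ) 1, ‖fderiv ℝ H (x + t • (y - x))‖ₑ := by
  have hderiv : ∀ t ∈ uIcc (0 : ℝ) 1, HasDerivAt (fun t : ℝ => H (x + t • (y - x)))
      (fderiv ℝ H (x + t • (y - x)) (y - x)) t := fun t _ => by
    have hline : HasDerivAt (fun t : ℝ => x + t • (y - x)) (y - x) t := by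
      simpa using ((hasDerivAt_id t).smul_const (y - x)).const_add x
    exact (hH.differentiable one_ne_zero _).hasFDerivAt.comp_hasDerivAt t hline
  have hcont : Continuous fun t : ℝ => fderiv ℝ H (x + t • (y - x)) :=
    (hH.continuous_fderiv one_ne_zero).comp (by fun_prop)
  have hftc := intervalIntegral.integral_eq_sub_of_hasDerivAt hderiv
    ((hcont.clm_apply continuous_const).intervalIntegrable 0 1)
  simp only [one_smul, add_sub_cancel, zero_smul, add_zero] at hftc
  rw [← hftc, intervalIntegral.integral_of_le zero_le_one,
    ← lintegral_const_mul _ hcont.enorm.measurable]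
  refine (enorm_integral_le_lintegral_enorm _).trans (lintegral_mono fun t => ?_)
  rw [mul_comm]
  exact ContinuousLinearMap.le_opENorm _ _

section CentrePoincare

variable {E F : Type*} [NormedAddCommGroup E] [NormedSpace ℝ E] [MeasurableSpace E] [BorelSpace E]
  [NormedAddCommGroup F] [NormedSpace ℝ F] {μ : Measure E} {H : E → F} {x : E} {r : ℝ}

lemma setLIntegral_comp_homothety [FiniteDimensional ℝ E] [μ.IsAddHaarMeasure] {N : E → ℝ≥0∞}
    (hN : Measurable N) (x : E) {t : ℝ} (ht : 0 < t) (r : ℝ) :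
    ∫⁻ y in closedBall x r, N (x + t • (y - x)) ∂μ =
      ENNReal.ofReal (t ^ Module.finrank ℝ E)⁻¹ * ∫⁻ y in closedBall x (t * r), N y ∂μ := by
  set P : E → ℝ≥0∞ := fun u => (closedBall x (t * r)).indicator N (x + u)
  have hPm : Measurable P :=
    (hN.indicator measurableSet_closedBall).comp (measurable_const_add x)
  have hmem : ∀ y, x + t • (y - x) ∈ closedBall x (t * r) ↔ y ∈ closedBall x r := fun y => by
    rw [mem_closedBall, mem_closedBall, dist_eq_norm, dist_eq_norm, add_sub_cancel_left,
      norm_smul, Real.norm_of_nonneg ht.le, mul_le_mul_iff_right₀ ht]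
  calc _ = ∫⁻ y, P (t • (y - x)) ∂μ := by
        rw [← lintegral_indicator measurableSet_closedBall]
        refine lintegral_congr fun y => ?_
        by_cases hy : y ∈ closedBall x r
        · exact (indicator_of_mem hy _).trans (indicator_of_mem ((hmem y).2 hy) N).symm
        · exact (indicator_of_notMem hy _).trans (indicator_of_notMem (mt (hmem y).1 hy) N).symm
    _ = ∫⁻ y, P (t • y) ∂μ := lintegral_sub_right_eq_self (fun y => P (t • y)) x
    _ = ∫⁻ y, P y ∂(Measure.map (t • ·) μ) := by
        rw [lintegral_map hPm (measurable_const_smul t)]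
    _ = ENNReal.ofReal (t ^ Module.finrank ℝ E)⁻¹ * ∫⁻ y, P y ∂μ := by
        rw [Measure.map_addHaar_smul _ ht.ne', lintegral_smul_measure,
          abs_of_pos (by positivity), smul_eq_mul]
    _ = _ := by
        rw [lintegral_add_left_eq_self ((closedBall x (t * r)).indicator N) x,
          lintegral_indicator measurableSet_closedBall]

lemma setLIntegral_enorm_sub_le_of_average_fderiv_le [FiniteDimensional ℝ E] [μ.IsAddHaarMeasure]
    [CompleteSpace F] (hH : ContDiff ℝ 1 H) (hr : 0 < r) {M : ℝ≥0∞}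
    (hM : ∀ s ∈ Ioc 0 r, ∫⁻ y in closedBall x s, ‖fderiv ℝ H y‖ₑ ∂μ ≤ M * μ (closedBall x s)) :
    ∫⁻ y in closedBall x r, ‖H y - H x‖ₑ ∂μ ≤ ENNReal.ofReal r * (M * μ (closedBall x r)) := by
  have hDc : Continuous (fderiv ℝ H) := hH.continuous_fderiv one_ne_zero
  have hjoint : Measurable fun q : E × ℝ => ‖fderiv ℝ H (x + q.2 • (q.1 - x))‖ₑ :=
    (hDc.comp (by fun_prop)).enorm.measurable
  have hslice : ∀ t ∈ Ioc (0 : ℝ) 1,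
      ∫⁻ y in closedBall x r, ‖fderiv ℝ H (x + t • (y - x))‖ₑ ∂μ ≤ M * μ (closedBall x r) :=
    fun t ht => by
    have htn : (0 : ℝ) < t ^ Module.finrank ℝ E := pow_pos ht.1 _
    calc ∫⁻ y in closedBall x r, ‖fderiv ℝ H (x + t • (y - x))‖ₑ ∂μ
        ≤ ENNReal.ofReal (t ^ Module.finrank ℝ E)⁻¹ * (M * μ (closedBall x (t * r))) := by
          rw [setLIntegral_comp_homothety hDc.enorm.measurable x ht.1]
          gcongr
          exact hM _ ⟨mul_pos ht.1 hr, mul_le_of_le_one_left hr.le ht.2⟩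
      _ = (ENNReal.ofReal (t ^ Module.finrank ℝ E)⁻¹ * ENNReal.ofReal (t ^ Module.finrank ℝ E)) *
            (M * μ (closedBall x r)) := by
          rw [Measure.addHaar_closedBall_mul _ _ ht.1.le hr.le,
            Measure.addHaar_closedBall_center _ x]
          ring
      _ = M * μ (closedBall x r) := by
          rw [← ENNReal.ofReal_mul (inv_nonneg.2 htn.le), inv_mul_cancel₀ htn.ne',
            ENNReal.ofReal_one, one_mul]
  calc ∫⁻ y in closedBall x r, ‖H y - H x‖ₑ ∂μ
      ≤ ∫⁻ y in closedBall x r, ENNReal.ofReal r *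
          ∫⁻ t in Ioc (0 : ℝ) 1, ‖fderiv ℝ H (x + t • (y - x))‖ₑ ∂volume ∂μ := by
        refine setLIntegral_mono (hjoint.lintegral_prod_right.const_mul _) fun y hy =>
          (enorm_sub_le_mul_lintegral_enorm_fderiv hH x y).trans ?_
        gcongr
        rw [← ofReal_norm, ← dist_eq_norm]
        exact ENNReal.ofReal_le_ofReal hy
    _ = ENNReal.ofReal r * ∫⁻ t in Ioc (0 : ℝ) 1,
          ∫⁻ y in closedBall x r, ‖fderiv ℝ H (x + t • (y - x))‖ₑ ∂μ := by
        rw [lintegral_const_mul _ hjoint.lintegral_prod_right,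
          lintegral_lintegral_swap hjoint.aemeasurable]
    _ ≤ ENNReal.ofReal r * ∫⁻ _ in Ioc (0 : ℝ) 1, M * μ (closedBall x r) := by
        gcongr ENNReal.ofReal r * ?_
        exact setLIntegral_mono measurable_const hslice
    _ = _ := by simp

end CentrePoincare

section Mollification

variable {E F : Type*} [NormedAddCommGroup E] [NormedSpace ℝ E] [FiniteDimensional ℝ E]
  [MeasurableSpace E] [BorelSpace E] [NormedAddCommGroup F] [NormedSpace ℝ F] [CompleteSpace F]
  {μ : Measure E} [μ.IsAddHaarMeasure] {Ω : Set E} {h : E → F} {G : E → E →L[ℝ] F} {x : E}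
  {R ρ : ℝ} {η : ℝ≥0∞}

lemma setLIntegral_enorm_fderiv_normed_convolution_le
    (hh : ContinuousOn h (closedBall x R))
    (hG : ∀ v, HasWeakLineDerivOn μ h (fun y => G y v) v Ω) (hΩ : MeasurableSet Ω)
    (hRΩ : closedBall x R ⊆ Ω) (hGm : AEMeasurable (fun y => ‖G y‖ₑ) (μ.restrict (closedBall x R)))
    (hη : ∀ s ∈ Ioc 0 R, ∫⁻ y in closedBall x s, ‖G y‖ₑ ∂μ ≤ η * μ (closedBall x s))
    {φ : ContDiffBump (0 : E)} (hφ : φ.rIn = φ.rOut / 2) {s : ℝ} (hs : 0 < s)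
    (hsR : s + φ.rOut ≤ R) :
    ∫⁻ z in closedBall x s, ‖fderiv ℝ (convolution (φ.normed μ) ((closedBall x R).indicator h)
        (ContinuousLinearMap.lsmul ℝ ℝ) μ) z‖ₑ ∂μ ≤
      4 ^ Module.finrank ℝ E * η * μ (closedBall x s) := by
  set S := closedBall x R
  have hpt : ∀ z ∈ closedBall x s, ‖fderiv ℝ (convolution (φ.normed μ) (S.indicator h)
      (ContinuousLinearMap.lsmul ℝ ℝ) μ) z‖ₑ ≤
        ∫⁻ y, ‖φ.normed μ (z - y)‖ₑ * S.indicator (fun y => ‖G y‖ₑ) y ∂μ := fun z hz =>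
    enorm_fderiv_convolution_le hG hΩ measurableSet_closedBall hRΩ
      (hh.integrableOn_compact (isCompact_closedBall x R)) φ.contDiff_normed
      φ.hasCompactSupport_normed ((tsupport_normed_contDiffBump_sub_subset μ φ z).trans
        (closedBall_subset_closedBall' (by linarith [mem_closedBall.1 hz])))
  refine (setLIntegral_mono' measurableSet_closedBall hpt).trans
    (setLIntegral_lintegral_mul_comp_sub_le_of_average_le (K := fun y => ‖φ.normed μ y‖ₑ)
      φ.rOut_pos hs (fun y hy => ?_) φ.continuous_normed.enorm.measurable
      (lintegral_enorm_normed_contDiffBump μ φ)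
      (fun y => hφ ▸ enorm_normed_contDiffBump_le μ φ y)
      ((aemeasurable_indicator_iff measurableSet_closedBall).2 hGm) (fun ρ hρ => ?_) hsR)
  · rw [normed_contDiffBump_eq_zero μ hy, enorm_zero]
  · exact (lintegral_mono (indicator_le_self _ _)).trans (hη ρ hρ)

lemma hasSmoothApprox_of_average_enorm_le (hh : ContinuousOn h (closedBall x R)) (hx : h x = 0)
    (hG : ∀ v, HasWeakLineDerivOn μ h (fun y => G y v) v Ω) (hΩ : MeasurableSet Ω)
    (hRΩ : closedBall x R ⊆ Ω) (hGm : AEMeasurable (fun y => ‖G y‖ₑ) (μ.restrict (closedBall x R)))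
    (hη : ∀ s ∈ Ioc 0 R, ∫⁻ y in closedBall x s, ‖G y‖ₑ ∂μ ≤ η * μ (closedBall x s))
    (hρ : 0 < ρ) (hρR : 2 * ρ < R) {M : ℝ≥0} (hM : 4 ^ Module.finrank ℝ E * η ≤ M) :
    HasSmoothApprox μ h x ρ M := by
  intro τ hτ
  obtain ⟨δ₁, hδ₁, hclose⟩ := exists_forall_dist_normed_convolution_le μ hh
    (show ρ < R by linarith) (half_pos hτ)
  set δ := min δ₁ (R - 2 * ρ)
  have hδ : 0 < δ := lt_min hδ₁ (by linarith)
  have hδR : δ ≤ R - 2 * ρ := min_le_right _ _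
  let φ : ContDiffBump (0 : E) := ⟨δ / 2, δ, half_pos hδ, half_lt_self hδ⟩
  set H₀ : E → F := convolution (φ.normed μ) ((closedBall x R).indicator h)
    (ContinuousLinearMap.lsmul ℝ ℝ) μ
  have hH₀ : ContDiff ℝ 1 H₀ := φ.hasCompactSupport_normed.contDiff_convolution_left _
    φ.contDiff_normed ((integrable_indicator_iff measurableSet_closedBall).2
      (hh.integrableOn_compact (isCompact_closedBall x R))).locallyIntegrable
  have hav : ∀ s ∈ Ioc 0 (2 * ρ),
      ∫⁻ z in closedBall x s, ‖fderiv ℝ H₀ z‖ₑ ∂μ ≤ M * μ (closedBall x s) := fun s hs =>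
    (setLIntegral_enorm_fderiv_normed_convolution_le hh hG hΩ hRΩ hGm hη (φ := φ) rfl hs.1
      (show s + δ ≤ R by linarith [hs.2])).trans (mul_le_mul_left hM _)
  refine ⟨fun y => H₀ y - H₀ x, hH₀.sub contDiff_const, fun y hy => ?_, ?_,
    setLIntegral_enorm_sub_le_of_average_fderiv_le hH₀ (by positivity) hav⟩
  · have hy' : ‖H₀ y - h y‖ ≤ τ / 2 := hclose φ (min_le_left _ _) y hy
    have hx' : ‖H₀ x - h x‖ ≤ τ / 2 := hclose φ (min_le_left _ _) x (mem_closedBall_self hρ.le)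
    rw [hx, sub_zero] at hx'
    calc ‖H₀ y - H₀ x - h y‖ = ‖(H₀ y - h y) - H₀ x‖ := by congr 1; abel
      _ ≤ τ := (norm_sub_le _ _).trans (by linarith)
  · simpa only [fderiv_sub_const] using hav (2 * ρ) ⟨by positivity, le_rfl⟩

end Mollification

/-- `x` is a Lebesgue point of `g`: the mean oscillation of `g` around its value at `x` over
closed balls centred at `x` tends to zero. -/
def IsLebesguePoint {E F : Type*} [PseudoMetricSpace E] [MeasurableSpace E]
    [NormedAddCommGroup F] (μ : Measure E) (g : E → F) (x : E) : Prop :=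
  Tendsto (fun r => (∫⁻ y in closedBall x r, ‖g y - g x‖ₑ ∂μ) / μ (closedBall x r)) (𝓝[>] 0) (𝓝 0)

lemma HasWeakLineDerivOn.remainder {E F : Type*} [NormedAddCommGroup E] [NormedSpace ℝ E]
    [FiniteDimensional ℝ E] [MeasurableSpace E] [BorelSpace E] [NormedAddCommGroup F]
    [NormedSpace ℝ F] {μ : Measure E} [μ.IsAddHaarMeasure] {Ω : Set E} {f : E → F}
    {g : E → E →L[ℝ] F} {v : E} (hg : HasWeakLineDerivOn μ f (fun y => g y v) v Ω)
    (hf : LocallyIntegrableOn f Ω μ) (hgloc : LocallyIntegrableOn g Ω μ) (A : E →L[ℝ] F) (x : E) :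
    HasWeakLineDerivOn μ (fun y => f y - f x - A (y - x)) (fun y => (g y - A) v) v Ω := by
  have hT : ContDiff ℝ 1 fun y => f x + A (y - x) := by fun_prop
  have hdT : ∀ y, fderiv ℝ (fun y => f x + A (y - x)) y = A := fun y => by
    rw [fderiv_const_add, fderiv_comp_sub (f := A), A.fderiv]
  have hsub := hg.sub (hasWeakLineDerivOn_fderiv hT v Ω) hf
    (hT.continuous.locallyIntegrable.locallyIntegrableOn Ω) ?_ ?_
  · simpa only [hdT, sub_add_eq_sub_sub, sub_apply] using hsub
  · exact fun y hy => (hgloc y hy).imp fun s hs => ⟨hs.1,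
      (ContinuousLinearMap.apply ℝ F v).integrable_comp hs.2⟩
  · simp only [hdT]
    exact (locallyIntegrable_const _).locallyIntegrableOn Ω

/-- `f` is `1`-finely differentiable at `x` with derivative `A`: up to any relative error `ε` the
affine approximation holds on a `1`-finely open set containing `x`. -/
def HasFineFDerivAt {F : Type*} [NormedAddCommGroup F] [NormedSpace ℝ F] (f : En n → F)
    (A : En n →L[ℝ] F) (x : En n) : Prop :=
  ∀ ε > 0, ∃ U, FinelyOpen1 U ∧ x ∈ U ∧ ∀ y ∈ U, ‖f y - f x - A (y - x)‖ ≤ ε * ‖y - x‖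

lemma finelyOpen1_insert {W : Set (En n)} {x : En n} (hW : IsOpen W)
    (hx : Tendsto (fun r : ℝ => cap1 ((insert x W)ᶜ ∩ ball x r) / ENNReal.ofReal (r ^ (n - 1)))
      (𝓝[>] 0) (𝓝 0)) : FinelyOpen1 (insert x W) := by
  rintro z (rfl | hz)
  · exact hx
  · obtain ⟨d, hd, hdW⟩ := Metric.isOpen_iff.1 hW z hz
    refine tendsto_const_nhds.congr' ?_
    filter_upwards [Ioo_mem_nhdsGT hd] with r hr
    have hempty : (insert x W)ᶜ ∩ ball z r = ∅ := disjoint_iff_inter_eq_empty.1 <|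
      disjoint_compl_left.mono_right ((ball_subset_ball hr.2.le).trans
        (hdW.trans (subset_insert x W)))
    rw [hempty, cap1_empty, ENNReal.zero_div]

section FineDifferentiability

variable {F : Type*} [NormedAddCommGroup F] [InnerProductSpace ℝ F] {Ω : Set (En n)}
  {f h : En n → F} {g G : En n → En n →L[ℝ] F} {x : En n} {ε : ℝ}

lemma tendsto_cap1_superlevel_div [CompleteSpace F] (hn : 2 ≤ n) (hΩ : IsOpen Ω) (hx : x ∈ Ω)
    (hh : ContinuousOn h Ω) (hhx : h x = 0)
    (hG : ∀ v, HasWeakLineDerivOn volume h (fun y => G y v) v Ω) (hGloc : LocallyIntegrableOn G Ω)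
    (hG0 : Tendsto (fun r => (∫⁻ y in closedBall x r, ‖G y‖ₑ) / volume (closedBall x r))
      (𝓝[>] 0) (𝓝 0)) (hε : 0 < ε) :
    Tendsto (fun r : ℝ => cap1 ({y | y ≠ x ∧ ε * ‖y - x‖ ≤ ‖h y‖} ∩ ball x r) /
      ENNReal.ofReal (r ^ (n - 1))) (𝓝[>] 0) (𝓝 0) := by
  obtain ⟨C, hC, hcap⟩ := exists_cap1_superlevel_le (F := F) hn
  refine ENNReal.tendsto_nhds_zero.2 fun e he => ?_
  obtain ⟨M, hM, hMe⟩ := ENNReal.exists_nnreal_pos_mul_lt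
    (ENNReal.mul_ne_top hC (ENNReal.ofReal_ne_top (r := ε⁻¹))) he.ne'
  set η : ℝ≥0∞ := M / 4 ^ Module.finrank ℝ (En n)
  have hη : 0 < η := ENNReal.div_pos (by exact_mod_cast hM.ne') (by finiteness)
  obtain ⟨R₁, hR₁, havg⟩ :=
    mem_nhdsGT_iff_exists_Ioc_subset.1 (ENNReal.tendsto_nhds_zero.1 hG0 η hη)
  obtain ⟨R₂, hR₂, hR₂Ω⟩ := Metric.nhds_basis_closedBall.mem_iff.1 (hΩ.mem_nhds hx)
  set R := min R₁ R₂
  have hR : 0 < R := lt_min hR₁ hR₂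
  have hRΩ : closedBall x R ⊆ Ω := (closedBall_subset_closedBall (min_le_right _ _)).trans hR₂Ω
  have hsmooth : ∀ ρ, 0 < ρ → 2 * ρ < R → HasSmoothApprox volume h x ρ M := fun ρ hρ hρR =>
    hasSmoothApprox_of_average_enorm_le (hh.mono hRΩ) hhx hG hΩ.measurableSet hRΩ
      (hGloc.integrableOn_compact_subset hRΩ (isCompact_closedBall x R)).aestronglyMeasurable.enorm
      (fun s hs => (ENNReal.div_le_iff (measure_closedBall_pos volume x hs.1).ne'
        measure_closedBall_lt_top.ne).1 (havg ⟨hs.1, hs.2.trans (min_le_left _ _)⟩))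
      hρ hρR ENNReal.mul_div_le
  filter_upwards [Ioo_mem_nhdsGT (lt_min one_pos (half_pos hR))] with r hr
  have hr1 : r ≤ 1 := hr.2.le.trans (min_le_left _ _)
  have hrR : r < R / 2 := hr.2.trans_le (min_le_right _ _)
  refine ENNReal.div_le_of_le_mul ((hcap h x r ε M hr.1 hr1 hε fun ρ hρ =>
    hsmooth ρ hρ.1 (by linarith [hρ.2])).trans ?_)
  gcongr
  rw [mul_comm]
  exact hMe.le

theorem hasFineFDerivAt_of_isLebesguePoint [CompleteSpace F] (hn : 2 ≤ n) (hΩ : IsOpen Ω)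
    (hx : x ∈ Ω) (hf : ContinuousOn f Ω)
    (hg : ∀ v, HasWeakLineDerivOn volume f (fun y => g y v) v Ω)
    (hgloc : LocallyIntegrableOn g Ω) (hgx : IsLebesguePoint volume g x) :
    HasFineFDerivAt f (g x) x := by
  intro ε hε
  set h : En n → F := fun y => f y - f x - g x (y - x) with hh_def
  have hh : ContinuousOn h Ω := (hf.sub continuousOn_const).sub (by fun_prop)
  set W : Set (En n) := Ω ∩ (fun y => ε * ‖y - x‖ - ‖h y‖) ⁻¹' Ioi 0
  have hW : IsOpen W :=
    ContinuousOn.isOpen_inter_preimage (ContinuousOn.sub (by fun_prop) hh.norm) hΩ isOpen_Ioi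
  have hbad : Tendsto (fun r : ℝ => cap1 ({y | y ≠ x ∧ ε * ‖y - x‖ ≤ ‖h y‖} ∩ ball x r) /
      ENNReal.ofReal (r ^ (n - 1))) (𝓝[>] 0) (𝓝 0) :=
    tendsto_cap1_superlevel_div hn hΩ hx hh (by simp [hh_def])
      (fun v => (hg v).remainder (hf.locallyIntegrableOn hΩ.measurableSet) hgloc (g x) x)
      (hgloc.sub ((locallyIntegrable_const (g x)).locallyIntegrableOn Ω)) hgx hε
  obtain ⟨R, hR, hRΩ⟩ := Metric.isOpen_iff.1 hΩ x hx
  refine ⟨insert x W, finelyOpen1_insert hW (tendsto_of_tendsto_of_tendsto_of_le_of_le'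
    tendsto_const_nhds hbad (Eventually.of_forall fun _ => zero_le) ?_), mem_insert _ _, ?_⟩
  · filter_upwards [Ioo_mem_nhdsGT hR] with r hr
    refine ENNReal.div_le_div_right (cap1_mono ?_) _
    rintro y ⟨hy, hyr⟩
    rw [mem_compl_iff, mem_insert_iff, not_or] at hy
    exact ⟨⟨hy.1, not_lt.1 fun hlt =>
      hy.2 ⟨hRΩ (ball_subset_ball hr.2.le hyr), sub_pos.2 hlt⟩⟩, hyr⟩
  · rintro y (rfl | hy)
    · simp
    · exact (sub_pos.1 hy.2).le

end FineDifferentiability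

lemma integrable_sum_clm_apply {ι α E F : Type*} [Fintype ι] [MeasurableSpace α] {ν : Measure α}
    [NormedAddCommGroup E] [NormedSpace ℝ E] [NormedAddCommGroup F] [NormedSpace ℝ F]
    (L : ι → E →L[ℝ] F) {w : ι → α → E} (hw : ∀ i, Integrable (w i) ν) :
    Integrable (fun y => ∑ i, L i (w i y)) ν :=
  integrable_finsetSum _ fun i _ => (L i).integrable_comp (hw i)

lemma integrable_of_forall_apply {ι α E F : Type*} [Finite ι] [NormedAddCommGroup E]
    [NormedSpace ℝ E] [FiniteDimensional ℝ E] [NormedAddCommGroup F] [NormedSpace ℝ F]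
    [MeasurableSpace α] {ν : Measure α} (b : Module.Basis ι ℝ E) {g : α → E →L[ℝ] F}
    (hg : ∀ i, Integrable (fun y => g y (b i)) ν) : Integrable g ν := by
  have := Fintype.ofFinite ι
  obtain ⟨L, hL⟩ : ∃ L : ι → F →L[ℝ] E →L[ℝ] F, ∀ i w u, L i w u = b.coord i u • w :=
    ⟨fun i => ContinuousLinearMap.smulRightL ℝ E F (LinearMap.toContinuousLinearMap (b.coord i)),
      fun _ _ _ => rfl⟩
  have hsum : g = fun y => ∑ i, L i (g y (b i)) := by
    ext y u
    conv_lhs => rw [← b.sum_repr u, map_sum]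
    simp only [map_smul, sum_apply, hL, Module.Basis.coord_apply]
  rw [hsum]
  exact integrable_sum_clm_apply L hg

section IntegrabilityOfWeakDeriv

variable {E F : Type*} [NormedAddCommGroup E] [NormedSpace ℝ E] [NormedAddCommGroup F]
  [NormedSpace ℝ F]

lemma apply_add_eq_of_fderiv_apply_eq_zero {H : E → F} (hH : Differentiable ℝ H) {x v : E}
    (hv : ∀ s ∈ Ico (0 : ℝ) 1, fderiv ℝ H (x + s • v) v = 0) : H (x + v) = H x := by
  have hderiv : ∀ s ∈ Ico (0 : ℝ) 1,
      HasDerivWithinAt (fun s : ℝ => H (x + s • v)) 0 (Ici s) s := fun s hs => by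
    have hline : HasDerivAt (fun s : ℝ => x + s • v) v s := by
      simpa using ((hasDerivAt_id s).smul_const v).const_add x
    exact hv s hs ▸ ((hH _).hasFDerivAt.comp_hasDerivAt s hline).hasDerivWithinAt
  simpa using constant_of_has_deriv_right_zero (f := fun s : ℝ => H (x + s • v))
    (hH.continuous.comp (by fun_prop)).continuousOn hderiv 1 (right_mem_Icc.2 zero_le_one)

variable [MeasurableSpace E] [BorelSpace E] {μ : Measure E} {Ω : Set E} {f w : E → F} {v x : E}
  {R : ℝ}

/- The Bochner integral of a non-integrable function is `0`, so a single divergent integral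
`∫ φ₀ • w` makes every integral `∫ ∂ᵥφ • f` vanish: replace `φ` by `φ + φ₀` if need be. -/
lemma HasWeakLineDerivOn.zero_of_not_integrableOn (hw : HasWeakLineDerivOn μ f w v Ω)
    (hf : LocallyIntegrableOn f Ω μ) {φ₀ : E → ℝ} (hφ₀ : ContDiff ℝ 1 φ₀)
    (hφ₀c : HasCompactSupport φ₀) (hφ₀Ω : tsupport φ₀ ⊆ Ω)
    (hni : ¬ IntegrableOn (fun y => φ₀ y • w y) Ω μ) : HasWeakLineDerivOn μ f 0 v Ω := by
  have hfint : ∀ φ : E → ℝ, ContDiff ℝ 1 φ → HasCompactSupport φ → tsupport φ ⊆ Ω →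
      IntegrableOn (fun y => fderiv ℝ φ y v • f y) Ω μ := fun φ hφ hφc hφΩ =>
    integrableOn_smul_of_tsupport_subset
      ((hφ.continuous_fderiv one_ne_zero).clm_apply continuous_const) (hφc.fderiv_apply ℝ v)
      ((tsupport_fderiv_apply_subset ℝ v).trans hφΩ) hf
  have hvanish : ∀ φ : E → ℝ, ContDiff ℝ 1 φ → HasCompactSupport φ → tsupport φ ⊆ Ω →
      ¬ IntegrableOn (fun y => φ y • w y) Ω μ → ∫ y in Ω, fderiv ℝ φ y v • f y ∂μ = 0 :=
    fun φ hφ hφc hφΩ hφni => by rw [hw φ hφ hφc hφΩ, integral_undef hφni, neg_zero]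
  intro φ hφ hφc hφΩ
  simp only [Pi.zero_apply, smul_zero, integral_zero, neg_zero]
  by_cases hφi : IntegrableOn (fun y => φ y • w y) Ω μ
  · have hsum := hvanish (φ + φ₀) (hφ.add hφ₀) (hφc.add hφ₀c)
      ((tsupport_add φ φ₀).trans (union_subset hφΩ hφ₀Ω)) fun h => hni <| by
        simpa only [Pi.add_apply, add_smul, Pi.sub_def, add_sub_cancel_left] using h.sub hφi
    have hadd : ∀ y, fderiv ℝ (φ + φ₀) y v • f y =
        fderiv ℝ φ y v • f y + fderiv ℝ φ₀ y v • f y := fun y => by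
      rw [fderiv_add (hφ.differentiable one_ne_zero y) (hφ₀.differentiable one_ne_zero y),
        add_apply, add_smul]
    simp_rw [hadd] at hsum
    rwa [integral_add (hfint φ hφ hφc hφΩ) (hfint φ₀ hφ₀ hφ₀c hφ₀Ω),
      hvanish φ₀ hφ₀ hφ₀c hφ₀Ω hni, add_zero] at hsum
  · exact hvanish φ hφ hφc hφΩ hφi

variable [FiniteDimensional ℝ E]

lemma HasWeakLineDerivOn.apply_add_smul_eq_of_zero [μ.IsAddHaarMeasure] [CompleteSpace F]
    (h0 : HasWeakLineDerivOn μ f 0 v Ω) (hΩ : MeasurableSet Ω) (hRΩ : closedBall x R ⊆ Ω)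
    (hf : ContinuousOn f (closedBall x R)) {t : ℝ} (ht : ‖t • v‖ < R) : f (x + t • v) = f x := by
  set ρ := ‖t • v‖
  refine eq_of_forall_dist_le fun τ hτ => ?_
  obtain ⟨δ₁, hδ₁, hclose⟩ := exists_forall_dist_normed_convolution_le μ hf ht (half_pos hτ)
  set δ := min δ₁ (R - ρ)
  have hδ : 0 < δ := lt_min hδ₁ (by linarith)
  have hδR : δ ≤ R - ρ := min_le_right _ _
  let φ : ContDiffBump (0 : E) := ⟨δ / 2, δ, half_pos hδ, half_lt_self hδ⟩
  set H : E → F := convolution (φ.normed μ) ((closedBall x R).indicator f)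
    (ContinuousLinearMap.lsmul ℝ ℝ) μ
  have hfint : IntegrableOn f (closedBall x R) μ :=
    hf.integrableOn_compact (isCompact_closedBall x R)
  have hH : ContDiff ℝ 1 H := φ.hasCompactSupport_normed.contDiff_convolution_left _
    φ.contDiff_normed ((integrable_indicator_iff measurableSet_closedBall).2
      hfint).locallyIntegrable
  have hsegment : ∀ s ∈ Icc (0 : ℝ) 1, x + s • t • v ∈ closedBall x ρ := fun s hs => by
    rw [mem_closedBall, dist_eq_norm, add_sub_cancel_left, norm_smul, Real.norm_of_nonneg hs.1]
    exact mul_le_of_le_one_left (norm_nonneg _) hs.2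
  have hderiv : ∀ z ∈ closedBall x ρ, fderiv ℝ H z v = 0 := fun z hz => by
    have hball : closedBall z δ ⊆ closedBall x R :=
      closedBall_subset_closedBall' (by linarith [mem_closedBall.1 hz])
    rw [h0.fderiv_convolution_apply hΩ measurableSet_closedBall hRΩ hfint φ.contDiff_normed
      φ.hasCompactSupport_normed
      ((tsupport_normed_contDiffBump_sub_subset μ φ z).trans hball)]
    simp only [Pi.zero_apply, smul_zero, integral_zero]
  have hconst : H (x + t • v) = H x :=
    apply_add_eq_of_fderiv_apply_eq_zero (hH.differentiable one_ne_zero) fun s hs => by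
      rw [map_smul, hderiv _ (hsegment s ⟨hs.1, hs.2.le⟩), smul_zero]
  have hend : ‖H (x + t • v) - f (x + t • v)‖ ≤ τ / 2 := hclose φ (min_le_left _ _) _ (by
    simpa using hsegment 1 (right_mem_Icc.2 zero_le_one))
  have hstart : ‖H x - f x‖ ≤ τ / 2 :=
    hclose φ (min_le_left _ _) x (mem_closedBall_self (norm_nonneg _))
  rw [hconst, ← dist_eq_norm] at hend
  rw [← dist_eq_norm] at hstart
  calc dist (f (x + t • v)) (f x) ≤ dist (H x) (f (x + t • v)) + dist (H x) (f x) :=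
        dist_triangle_left _ _ _
    _ ≤ τ := by linarith

lemma HasWeakLineDerivOn.not_zero_of_injOn [μ.IsAddHaarMeasure] [CompleteSpace F]
    (hΩ : IsOpen Ω) (hne : Ω.Nonempty) (hf : ContinuousOn f Ω) (hinj : InjOn f Ω) (hv : v ≠ 0) :
    ¬ HasWeakLineDerivOn μ f 0 v Ω := by
  intro h0
  obtain ⟨x, hx⟩ := hne
  obtain ⟨R, hR, hRΩ⟩ := Metric.nhds_basis_closedBall.mem_iff.1 (hΩ.mem_nhds hx)
  have hv0 : 0 < ‖v‖ := norm_pos_iff.2 hv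
  set t : ℝ := R / 2 / ‖v‖
  have ht : 0 < t := by positivity
  have htv : ‖t • v‖ = R / 2 := by
    rw [norm_smul, Real.norm_of_nonneg ht.le, div_mul_cancel₀ _ hv0.ne']
  have hmem : x + t • v ∈ Ω := hRΩ (by
    rw [mem_closedBall, dist_eq_norm, add_sub_cancel_left, htv]
    linarith)
  have heq : x + t • v = x := hinj hmem hx
    (h0.apply_add_smul_eq_of_zero hΩ.measurableSet hRΩ (hf.mono hRΩ) (by linarith))
  exact smul_ne_zero ht.ne' hv (add_eq_left.1 heq)

lemma HasWeakLineDerivOn.locallyIntegrableOn_of_injOn [μ.IsAddHaarMeasure] [CompleteSpace F]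
    (hw : HasWeakLineDerivOn μ f w v Ω) (hΩ : IsOpen Ω) (hf : ContinuousOn f Ω)
    (hinj : InjOn f Ω) (hv : v ≠ 0) : LocallyIntegrableOn w Ω μ := by
  intro x hx
  obtain ⟨R, hR, hRΩ⟩ := Metric.nhds_basis_closedBall.mem_iff.1 (hΩ.mem_nhds hx)
  let φ : ContDiffBump x := ⟨R / 2, R, half_pos hR, half_lt_self hR⟩
  have hφ : IntegrableOn (fun y => φ y • w y) Ω μ := by_contra fun hni =>
    HasWeakLineDerivOn.not_zero_of_injOn hΩ ⟨x, hx⟩ hf hinj hv <|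
      hw.zero_of_not_integrableOn (hf.locallyIntegrableOn hΩ.measurableSet) φ.contDiff
        φ.hasCompactSupport (φ.tsupport_eq.trans_subset hRΩ) hni
  refine ⟨closedBall x (R / 2), mem_nhdsWithin_of_mem_nhds (closedBall_mem_nhds x (half_pos hR)),
    (hφ.mono_set ((closedBall_subset_closedBall (by linarith)).trans hRΩ)).congr_fun
      (fun y hy => ?_) measurableSet_closedBall⟩
  simp only [φ.one_of_mem_closedBall hy, one_smul]

lemma locallyIntegrableOn_of_forall_apply {E F : Type*} [NormedAddCommGroup E] [NormedSpace ℝ E]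
    [FiniteDimensional ℝ E] [MeasurableSpace E] [NormedAddCommGroup F] [NormedSpace ℝ F]
    {μ : Measure E} {Ω : Set E} {g : E → E →L[ℝ] F}
    (hg : ∀ v ≠ 0, LocallyIntegrableOn (fun y => g y v) Ω μ) : LocallyIntegrableOn g Ω μ := by
  intro x hx
  let b := Module.finBasis ℝ E
  obtain ⟨s, hs, hint⟩ :=
    (eventually_all.2 fun i => (hg (b i) (b.ne_zero i) x hx).eventually).exists_mem_of_smallSets
  exact ⟨s, hs, integrable_of_forall_apply b hint⟩

end IntegrabilityOfWeakDeriv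

lemma ae_restrict_of_forall_exists_mem_nhds {E : Type*} [TopologicalSpace E]
    [SecondCountableTopology E] [MeasurableSpace E] {μ : Measure E} {Ω : Set E}
    (hΩ : MeasurableSet Ω) {p : E → Prop}
    (h : ∀ x ∈ Ω, ∃ s ∈ 𝓝 x, ∀ᵐ y ∂μ, y ∈ s → p y) : ∀ᵐ y ∂μ.restrict Ω, p y := by
  rw [ae_restrict_iff' hΩ, ae_iff]
  refine measure_null_of_locally_null _ fun x hx => ?_
  simp only [Classical.not_imp, mem_ofPred_eq] at hx
  obtain ⟨s, hs, hps⟩ := h x hx.1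
  refine ⟨_, inter_mem_nhdsWithin _ hs, measure_mono_null ?_ (ae_iff.1 hps)⟩
  rintro y ⟨hy, hys⟩ hp
  exact hy fun _ => hp hys

lemma IsLebesguePoint.congr_of_eventuallyEq {E F : Type*} [PseudoMetricSpace E] [MeasurableSpace E]
    [OpensMeasurableSpace E] [NormedAddCommGroup F] {μ : Measure E} {g g' : E → F} {x : E}
    (hg : IsLebesguePoint μ g x) (h : g =ᶠ[𝓝 x] g') : IsLebesguePoint μ g' x := by
  obtain ⟨R, hR, hball⟩ := Metric.eventually_nhds_iff_ball.1 h
  refine hg.congr' ?_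
  filter_upwards [Ioo_mem_nhdsGT hR] with r hr
  congr 1
  refine setLIntegral_congr_fun measurableSet_closedBall fun y hy => ?_
  simp only [hball y (closedBall_subset_ball hr.2 hy), h.self_of_nhds]

section Differentiation

variable {E : Type*} [NormedAddCommGroup E] [NormedSpace ℝ E] [FiniteDimensional ℝ E]
  [MeasurableSpace E] [BorelSpace E] {μ : Measure E} {x : E}

lemma ae_isLebesguePoint {F : Type*} [NormedAddCommGroup F] [IsLocallyFiniteMeasure μ] {Ω : Set E}
    (hΩ : IsOpen Ω) {g : E → F} (hg : LocallyIntegrableOn g Ω μ) :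
    ∀ᵐ x ∂μ.restrict Ω, IsLebesguePoint μ g x := by
  obtain ⟨u, hu, hΩu, hint⟩ := hg.exists_nat_integrableOn
  have hopen : ∀ i, IsOpen (u i ∩ Ω) := fun i => (hu i).inter hΩ
  have hlocal : ∀ i, ∀ᵐ x ∂μ, IsLebesguePoint μ ((u i ∩ Ω).indicator g) x := fun i => by
    filter_upwards [(Besicovitch.vitaliFamily μ).ae_tendsto_lintegral_enorm_sub_div_of_integrable
      ((integrable_indicator_iff (hopen i).measurableSet).2 (hint i))] with x hx
    exact hx.comp (Besicovitch.tendsto_filterAt μ x)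
  filter_upwards [ae_restrict_mem hΩ.measurableSet, ae_restrict_of_ae (ae_all_iff.2 hlocal)]
    with x hxΩ hx
  obtain ⟨i, hi⟩ := mem_iUnion.1 (hΩu hxΩ)
  refine (hx i).congr_of_eventuallyEq ?_
  filter_upwards [(hopen i).mem_nhds ⟨hi, hxΩ⟩] with y hy using indicator_of_mem hy g

lemma ofReal_pow_mul_div_closedBall_le [μ.IsAddHaarMeasure] {m : Set E → ℝ≥0∞} (hm : Monotone m)
    {t r : ℝ} (ht : t ∈ Ioo (0 : ℝ) 1) (hr : 0 < r) :
    ENNReal.ofReal (t ^ Module.finrank ℝ E) *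
      (m (closedBall x (t * r)) / μ (closedBall x (t * r))) ≤ m (ball x r) / μ (ball x r) := by
  have hvol : μ (closedBall x (t * r)) =
      ENNReal.ofReal (t ^ Module.finrank ℝ E) * μ (ball x r) := by
    rw [Measure.addHaar_closedBall μ x (mul_pos ht.1 hr).le, Measure.addHaar_ball_of_pos μ x hr,
      mul_pow, ENNReal.ofReal_mul (pow_nonneg ht.1.le _), mul_assoc]
  have ht0 : ENNReal.ofReal (t ^ Module.finrank ℝ E) ≠ 0 := by simpa using pow_pos ht.1 _
  rw [hvol, ← mul_div_assoc, ENNReal.mul_div_mul_left _ _ ht0 ENNReal.ofReal_ne_top]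
  gcongr
  exact hm (closedBall_subset_ball (mul_lt_of_lt_one_left hr ht.2))

lemma tendsto_div_ball_of_tendsto_div_closedBall [μ.IsAddHaarMeasure] {m : Set E → ℝ≥0∞}
    (hm : Monotone m) {J : ℝ≥0∞} (hJ : J ≠ ∞)
    (h : Tendsto (fun r => m (closedBall x r) / μ (closedBall x r)) (𝓝[>] 0) (𝓝 J)) :
    Tendsto (fun r => m (ball x r) / μ (ball x r)) (𝓝[>] 0) (𝓝 J) := by
  refine tendsto_order.2 ⟨fun l hl => ?_, fun u hu => ?_⟩
  · have hpow : Tendsto (fun t : ℝ => ENNReal.ofReal (t ^ Module.finrank ℝ E) * J) (𝓝[<] 1)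
        (𝓝 J) := by
      have hcont : Continuous fun t : ℝ => ENNReal.ofReal (t ^ Module.finrank ℝ E) * J :=
        (ENNReal.continuous_mul_const hJ).comp
          (ENNReal.continuous_ofReal.comp (continuous_pow _))
      simpa using (hcont.tendsto 1).mono_left (nhdsWithin_le_nhds (s := Iio 1))
    obtain ⟨t, hlt, ht⟩ := ((hpow.eventually_const_lt hl).and
      (Ioo_mem_nhdsLT (zero_lt_one' ℝ))).exists
    have hscale : Tendsto (fun r : ℝ => t * r) (𝓝[>] 0) (𝓝[>] 0) := 
      tendsto_nhdsWithin_iff.2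
        ⟨((continuous_const_mul t).tendsto' 0 0 (mul_zero t)).mono_left nhdsWithin_le_nhds,
          eventually_mem_nhdsWithin.mono fun _ hr => mul_pos ht.1 hr⟩
    filter_upwards [(ENNReal.Tendsto.const_mul (h.comp hscale)
      (Or.inr ENNReal.ofReal_ne_top)).eventually_const_lt hlt, self_mem_nhdsWithin] with r hr hr0
    exact hr.trans_le (ofReal_pow_mul_div_closedBall_le hm ht hr0)
  · filter_upwards [h.eventually_lt_const hu, self_mem_nhdsWithin] with r hr hr0
    refine lt_of_le_of_lt ?_ hr
    rw [Measure.addHaar_closedBall μ x (le_of_lt hr0), ← Measure.addHaar_ball_of_pos μ x hr0]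
    gcongr
    exact hm ball_subset_closedBall

end Differentiation

section VolumeDerivative

/-- The volume derivative of `f` at `x` with respect to `μ` and `ν` is `J`, as a limit along balls
centred at `x`. -/
def HasVolumeDerivAt {E F : Type*} [PseudoMetricSpace E] [MeasurableSpace E] [MeasurableSpace F]
    (μ : Measure E) (ν : Measure F) (f : E → F) (J : ℝ≥0∞) (x : E) : Prop :=
  Tendsto (fun r => ν (f '' ball x r) / μ (ball x r)) (𝓝[>] 0) (𝓝 J)

lemma exists_isFiniteMeasure_apply_eq_image_inter {E F : Type*} [TopologicalSpace E]
    [PolishSpace E] [MeasurableSpace E] [BorelSpace E] [TopologicalSpace F] [T2Space F]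
    [SecondCountableTopology F] [MeasurableSpace F] [BorelSpace F] (ν : Measure F)
    [IsFiniteMeasureOnCompacts ν] {f : E → F} {K : Set E} (hK : IsCompact K)
    (hf : ContinuousOn f K) (hinj : InjOn f K) :
    ∃ m : Measure E, IsFiniteMeasure m ∧ ∀ A, MeasurableSet A → m A = ν (f '' (K ∩ A)) := by
  have hemb := hf.measurableEmbedding hK.measurableSet hinj
  have hm : ∀ A, MeasurableSet A →
      ((ν.comap (K.domRestrict f)).map Subtype.val) A = ν (f '' (K ∩ A)) := fun A hA => by
    rw [Measure.map_apply measurable_subtype_coe hA, hemb.comap_apply, image_domRestrict,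
      inter_comm]
  refine ⟨_, ⟨?_⟩, hm⟩
  rw [hm _ MeasurableSet.univ, inter_univ]
  exact (hK.image_of_continuousOn hf).measure_lt_top

variable {E F : Type*} [NormedAddCommGroup E] [NormedSpace ℝ E] [FiniteDimensional ℝ E]
  [MeasurableSpace E] [BorelSpace E] {μ : Measure E} [μ.IsAddHaarMeasure] [TopologicalSpace F]
  [T2Space F] [SecondCountableTopology F] [MeasurableSpace F] [BorelSpace F] {ν : Measure F}
  [IsFiniteMeasureOnCompacts ν] {f : E → F}

lemma ae_exists_hasVolumeDerivAt_of_isCompact {K : Set E} (hK : IsCompact K)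
    (hf : ContinuousOn f K) (hinj : InjOn f K) :
    ∀ᵐ x ∂μ, x ∈ interior K → ∃ J ≠ ∞, HasVolumeDerivAt μ ν f J x := by
  obtain ⟨m, hfin, hm⟩ := exists_isFiniteMeasure_apply_eq_image_inter ν hK hf hinj
  filter_upwards [Besicovitch.ae_tendsto_rnDeriv m μ, m.rnDeriv_lt_top μ] with x hx hlt hxK
  refine ⟨m.rnDeriv μ x, hlt.ne, tendsto_div_ball_of_tendsto_div_closedBall
    (m := fun s => ν (f '' s)) (fun s t hst => by dsimp only; gcongr) hlt.ne (hx.congr' ?_)⟩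
  obtain ⟨R, hR, hRK⟩ := Metric.nhds_basis_closedBall.mem_iff.1 (mem_interior_iff_mem_nhds.1 hxK)
  filter_upwards [Ioo_mem_nhdsGT hR] with r hr
  rw [hm _ measurableSet_closedBall,
    inter_eq_self_of_subset_right ((closedBall_subset_closedBall hr.2.le).trans hRK)]

lemma ae_exists_hasVolumeDerivAt {Ω : Set E} (hΩ : IsOpen Ω) (hf : ContinuousOn f Ω)
    (hinj : InjOn f Ω) : ∀ᵐ x ∂μ.restrict Ω, ∃ J ≠ ∞, HasVolumeDerivAt μ ν f J x :=
  ae_restrict_of_forall_exists_mem_nhds hΩ.measurableSet fun _ hx =>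
    have ⟨K, hK, hxK, hKΩ⟩ := exists_compact_subset hΩ hx
    ⟨interior K, isOpen_interior.mem_nhds hxK,
      ae_exists_hasVolumeDerivAt_of_isCompact hK (hf.mono hKΩ) (hinj.mono hKΩ)⟩

end VolumeDerivative

section FineDensity

variable [NeZero n] {U V : Set (En n)} {x : En n}

lemma FinelyOpen1.tendsto_volume_compl_div (hU : FinelyOpen1 U) (hx : x ∈ U) :
    Tendsto (fun r => volume (Uᶜ ∩ ball x r) / volume (ball x r)) (𝓝[>] 0) (𝓝 0) := by
  set ω := volume (ball (0 : En n) 1)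
  have hω : ω ≠ 0 := (measure_ball_pos volume 0 one_pos).ne'
  have hlim := ENNReal.Tendsto.const_mul (a := 4 / ω) (hU x hx)
    (Or.inr (ENNReal.div_ne_top (by norm_num) hω))
  rw [mul_zero] at hlim
  refine tendsto_of_tendsto_of_tendsto_of_le_of_le' tendsto_const_nhds hlim
    (Eventually.of_forall fun _ => zero_le) ?_
  filter_upwards [self_mem_nhdsWithin] with r hr
  have hr0 : (0 : ℝ) < r := hr
  have hball : volume (ball x r) = ENNReal.ofReal r * (ω * ENNReal.ofReal (r ^ (n - 1))) := by
    rw [Measure.addHaar_ball_of_pos volume x hr0, finrank_euclideanSpace_fin,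
      ← mul_pow_sub_one (NeZero.ne n), ENNReal.ofReal_mul hr0.le]
    ring
  calc volume (Uᶜ ∩ ball x r) / volume (ball x r)
      ≤ ENNReal.ofReal (4 * r) * cap1 (Uᶜ ∩ ball x r) / volume (ball x r) := by
        gcongr
        exact volume_le_mul_cap1 hr0 inter_subset_right
    _ = ENNReal.ofReal r * (4 * cap1 (Uᶜ ∩ ball x r)) /
          (ENNReal.ofReal r * (ω * ENNReal.ofReal (r ^ (n - 1)))) := by
        rw [hball, ENNReal.ofReal_mul zero_le_four, ENNReal.ofReal_ofNat]
        ring_nf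
    _ = 4 * cap1 (Uᶜ ∩ ball x r) / (ω * ENNReal.ofReal (r ^ (n - 1))) :=
        ENNReal.mul_div_mul_left _ _ (ENNReal.ofReal_pos.2 hr0).ne' ENNReal.ofReal_ne_top
    _ = 4 / ω * (cap1 (Uᶜ ∩ ball x r) / ENNReal.ofReal (r ^ (n - 1))) :=
        ENNReal.mul_div_mul_comm (Or.inl hω) (Or.inl measure_ball_lt_top.ne)

lemma FinelyOpen1.eventually_inter_ball_nonempty (hU : FinelyOpen1 U) (hV : FinelyOpen1 V)
    (hxU : x ∈ U) (hxV : x ∈ V) {κ : ℝ} (hκ : 0 < κ) :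
    ∀ᶠ r in 𝓝[>] 0, ∀ z, ball z (κ * r) ⊆ ball x r → (ball z (κ * r) ∩ (U ∩ V)).Nonempty := by
  have hsum := (hU.tendsto_volume_compl_div hxU).add (hV.tendsto_volume_compl_div hxV)
  rw [add_zero] at hsum
  filter_upwards [hsum.eventually_lt_const (ENNReal.ofReal_pos.2 (pow_pos hκ n)),
    self_mem_nhdsWithin] with r hlt hr z hz
  have hr0 : (0 : ℝ) < r := hr
  have hvol : volume (ball z (κ * r)) = ENNReal.ofReal (κ ^ n) * volume (ball x r) := by
    rw [Measure.addHaar_ball_of_pos volume z (mul_pos hκ hr0),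
      Measure.addHaar_ball_of_pos volume x hr0, finrank_euclideanSpace_fin, mul_pow,
      ENNReal.ofReal_mul (pow_nonneg hκ.le n), mul_assoc]
  rw [ENNReal.div_add_div_same] at hlt
  have hsmall := (ENNReal.div_lt_iff (Or.inl (measure_ball_pos volume x hr0).ne')
    (Or.inl measure_ball_lt_top.ne)).1 hlt
  rw [← hvol] at hsmall
  by_contra hempty
  refine hsmall.not_ge ((measure_mono fun y hy => ?_).trans (measure_union_le _ _))
  by_cases hyU : y ∈ U
  · exact Or.inr ⟨fun hyV => hempty ⟨y, hy, hyU, hyV⟩, hz hy⟩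
  · exact Or.inl ⟨hyU, hz hy⟩

end FineDensity

section ImageDiameter

variable {F : Type*} [NormedAddCommGroup F] [NormedSpace ℝ F]

lemma HasFineFDerivAt.eventually_exists_norm_sub_smul_apply_le [NeZero n] {f : En n → F}
    {A : En n →L[ℝ] F} {x : En n} (hA : HasFineFDerivAt f A x) {U : Set (En n)}
    (hU : FinelyOpen1 U) (hxU : x ∈ U) {e : En n} (he : ‖e‖ < 1) {δ : ℝ} (hδ : 0 < δ) :
    ∀ᶠ r in 𝓝[>] 0, ∃ y ∈ ball x r ∩ U, ‖f y - f x - r • A e‖ ≤ δ * r := by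
  obtain ⟨V, hV, hxV, hVδ⟩ := hA (δ / 2) (half_pos hδ)
  set κ := min (1 - ‖e‖) (δ / 2 / (‖A‖ + 1))
  have hκ : 0 < κ := lt_min (sub_pos.2 he) (by positivity)
  have hκe : ‖e‖ + κ ≤ 1 := by linarith [min_le_left (1 - ‖e‖) (δ / 2 / (‖A‖ + 1))]
  have hκA : ‖A‖ * κ ≤ δ / 2 := calc
    ‖A‖ * κ ≤ (‖A‖ + 1) * (δ / 2 / (‖A‖ + 1)) := by
      gcongr
      · linarith
      · exact min_le_right _ _
    _ = δ / 2 := mul_div_cancel₀ _ (by positivity)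
  filter_upwards [hU.eventually_inter_ball_nonempty hV hxU hxV hκ, self_mem_nhdsWithin]
    with r hr hr0
  have hr0 : (0 : ℝ) < r := hr0
  have hsub : ball (x + r • e) (κ * r) ⊆ ball x r := by
    refine ball_subset_ball' ?_
    rw [dist_eq_norm, add_sub_cancel_left, norm_smul, Real.norm_of_nonneg hr0.le]
    nlinarith
  obtain ⟨y, hy, hyU, hyV⟩ := hr _ hsub
  have hyx : ‖y - x‖ ≤ r := (mem_ball_iff_norm.1 (hsub hy)).le
  have hye : ‖y - (x + r • e)‖ ≤ κ * r := (mem_ball_iff_norm.1 hy).le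
  have hsplit : f y - f x - r • A e = (f y - f x - A (y - x)) + A (y - (x + r • e)) := by
    simp only [map_sub, map_add, map_smul]
    abel
  refine ⟨y, ⟨hsub hy, hyU⟩, ?_⟩
  calc ‖f y - f x - r • A e‖ ≤ ‖f y - f x - A (y - x)‖ + ‖A (y - (x + r • e))‖ :=
        hsplit ▸ norm_add_le _ _
    _ ≤ δ / 2 * ‖y - x‖ + ‖A‖ * ‖y - (x + r • e)‖ := add_le_add (hVδ y hyV) (A.le_opNorm _)
    _ ≤ δ / 2 * r + ‖A‖ * (κ * r) := by gcongr
    _ ≤ δ * r := by nlinarith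

lemma HasFineFDerivAt.eventually_le_ediam_image_inter [NeZero n] {f : En n → F}
    {A : En n →L[ℝ] F} {x : En n} (hA : HasFineFDerivAt f A x) {U : Set (En n)}
    (hU : FinelyOpen1 U) (hxU : x ∈ U) {c : ℝ} (hc : c < 2 * ‖A‖) :
    ∀ᶠ r in 𝓝[>] 0, ENNReal.ofReal (c * r) ≤ ediam (f '' (ball x r ∩ U)) := by
  rcases le_or_gt c 0 with hc0 | _
  · filter_upwards [self_mem_nhdsWithin] with r hr
    rw [ENNReal.ofReal_of_nonpos (mul_nonpos_of_nonpos_of_nonneg hc0 (le_of_lt hr))]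
    exact zero_le
  obtain ⟨e, he, hce⟩ := A.exists_lt_apply_of_lt_opNorm (show c / 2 < ‖A‖ by linarith)
  set δ := ‖A e‖ - c / 2 with hδ
  have hδ0 : 0 < δ := sub_pos.2 hce
  filter_upwards [hA.eventually_exists_norm_sub_smul_apply_le hU hxU he hδ0,
    hA.eventually_exists_norm_sub_smul_apply_le hU hxU (e := -e) (by rwa [norm_neg]) hδ0,
    self_mem_nhdsWithin] with r ⟨y, hy, hye⟩ ⟨z, hz, hze⟩ hr
  have hr0 : (0 : ℝ) < r := hr
  refine le_trans ?_ (edist_le_ediam_of_mem (mem_image_of_mem f hy) (mem_image_of_mem f hz))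
  rw [edist_dist, dist_eq_norm]
  refine ENNReal.ofReal_le_ofReal ?_
  have hsplit : (2 * r) • A e =
      (f y - f z) - (f y - f x - r • A e) + (f z - f x - r • A (-e)) := by
    rw [map_neg, smul_neg, mul_smul, two_smul]
    abel
  have hstretch : 2 * r * ‖A e‖ ≤ ‖f y - f z‖ + δ * r + δ * r := calc
    2 * r * ‖A e‖ = ‖(2 * r) • A e‖ := by rw [norm_smul, Real.norm_of_nonneg (by positivity)]
    _ ≤ ‖f y - f z‖ + ‖f y - f x - r • A e‖ + ‖f z - f x - r • A (-e)‖ := by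
      rw [hsplit]
      exact (norm_add_le _ _).trans (add_le_add_left (norm_sub_le _ _) _)
    _ ≤ ‖f y - f z‖ + δ * r + δ * r := by gcongr
  have hδr : δ * r = ‖A e‖ * r - c / 2 * r := by rw [hδ, sub_mul]
  linarith

lemma ediam_image_ball_inter_le {E : Type*} [NormedAddCommGroup E] [NormedSpace ℝ E] {f : E → F}
    {A : E →L[ℝ] F} {x : E} {U : Set E} {ε : ℝ} (hε : 0 ≤ ε)
    (hU : ∀ y ∈ U, ‖f y - f x - A (y - x)‖ ≤ ε * ‖y - x‖) (r : ℝ) :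
    ediam (f '' (ball x r ∩ U)) ≤ ENNReal.ofReal (2 * (‖A‖ + ε) * r) := by
  have hdisp : ∀ y ∈ ball x r ∩ U, ‖f y - f x‖ ≤ (‖A‖ + ε) * r := fun y ⟨hy, hyU⟩ => calc
    ‖f y - f x‖ ≤ ‖f y - f x - A (y - x)‖ + ‖A (y - x)‖ := by
      simpa using norm_add_le (f y - f x - A (y - x)) (A (y - x))
    _ ≤ ε * ‖y - x‖ + ‖A‖ * ‖y - x‖ := add_le_add (hU y hyU) (A.le_opNorm _)
    _ = (‖A‖ + ε) * ‖y - x‖ := by ring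
    _ ≤ (‖A‖ + ε) * r := by
      gcongr
      exact (mem_ball_iff_norm.1 hy).le
  refine ediam_le ?_
  rintro _ ⟨y, hy, rfl⟩ _ ⟨z, hz, rfl⟩
  rw [edist_dist]
  refine ENNReal.ofReal_le_ofReal ((dist_triangle_right _ _ (f x)).trans ?_)
  rw [dist_eq_norm, dist_eq_norm]
  linarith [hdisp y hy, hdisp z hz]

end ImageDiameter

section Dilatation

/-- The limit as `r → 0` of the quotient defining `KfU f U x r` when the images
`f '' (ball x r ∩ U)` have diameter `d * r` and the volume derivative of `f` at `x` is `J`. -/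
def limitDilatation (n : ℕ) (J : ℝ≥0∞) (d : ℝ) : ℝ≥0∞ :=
  (ENNReal.ofReal d ^ n / (volume (ball (0 : En n) 1) * J)) ^ (((n : ℝ) - 1)⁻¹)

lemma inv_natCast_sub_one_nonneg [NeZero n] : 0 ≤ ((n : ℝ) - 1)⁻¹ :=
  inv_nonneg.2 (sub_nonneg.2 (Nat.one_le_cast.2 NeZero.one_le))

lemma continuous_limitDilatation {J : ℝ≥0∞} (hJ : J ≠ 0) : Continuous (limitDilatation n J) := by
  have hω : volume (ball (0 : En n) 1) * J ≠ 0 :=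
    mul_ne_zero (measure_ball_pos volume 0 one_pos).ne' hJ
  exact ENNReal.continuous_rpow_const.comp <| (ENNReal.continuous_div_const _ hω).comp <|
    (ENNReal.continuous_pow n).comp ENNReal.continuous_ofReal

lemma limitDilatation_zero_right (hn : 2 ≤ n) {d : ℝ} (hd : 0 < d) :
    limitDilatation n 0 d = ∞ := by
  have hn1 : (0 : ℝ) < (n : ℝ) - 1 := sub_pos.2 (by exact_mod_cast hn)
  rw [limitDilatation, mul_zero, ENNReal.div_zero (pow_ne_zero _ (ENNReal.ofReal_pos.2 hd).ne'),
    ENNReal.top_rpow_of_pos (inv_pos.2 hn1)]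

lemma limitDilatation_pow_mul (hn : 2 ≤ n) {J : ℝ≥0∞} (hJ0 : J ≠ 0) (hJ : J ≠ ∞) (d : ℝ) :
    limitDilatation n J d ^ (n - 1) * J = ENNReal.ofReal d ^ n / volume (ball (0 : En n) 1) := by
  have hcast : (n : ℝ) - 1 = ((n - 1 : ℕ) : ℝ) := by
    rw [Nat.cast_sub (by omega), Nat.cast_one]
  have hne : ((n - 1 : ℕ) : ℝ) ≠ 0 := Nat.cast_ne_zero.2 (by omega)
  rw [limitDilatation, ← ENNReal.rpow_natCast, ← ENNReal.rpow_mul, hcast, inv_mul_cancel₀ hne,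
    ENNReal.rpow_one, ← ENNReal.mul_div_right_comm, ENNReal.mul_div_mul_right _ _ hJ0 hJ]

lemma HasVolumeDerivAt.tendsto_limitDilatation {F : Type*} [MeasurableSpace F] {ν : Measure F}
    {f : En n → F} {J : ℝ≥0∞} {x : En n} (hJ : HasVolumeDerivAt volume ν f J x) (d : ℝ) :
    Tendsto (fun r => (ENNReal.ofReal (d * r) ^ n / ν (f '' ball x r)) ^ (((n : ℝ) - 1)⁻¹))
      (𝓝[>] 0) (𝓝 (limitDilatation n J d)) := by
  set ω := volume (ball (0 : En n) 1)
  have hω : ω ≠ 0 := (measure_ball_pos volume 0 one_pos).ne'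
  have hω' : ω ≠ ∞ := measure_ball_lt_top.ne
  have hlim := ENNReal.Tendsto.const_div (a := ENNReal.ofReal d ^ n)
    (ENNReal.Tendsto.const_mul (a := ω) hJ (Or.inr hω'))
    (Or.inr (ENNReal.pow_ne_top ENNReal.ofReal_ne_top))
  refine ((ENNReal.continuous_rpow_const.tendsto _).comp hlim).congr' ?_
  filter_upwards [self_mem_nhdsWithin] with r hr
  have hr0 : (0 : ℝ) < r := hr
  have hrn : ENNReal.ofReal r ^ n ≠ 0 := pow_ne_zero _ (ENNReal.ofReal_pos.2 hr0).ne'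
  have hrn' : ENNReal.ofReal r ^ n ≠ ∞ := ENNReal.pow_ne_top ENNReal.ofReal_ne_top
  simp only [Function.comp_apply]
  congr 1
  rw [Measure.addHaar_ball_of_pos volume x hr0, finrank_euclideanSpace_fin,
    ENNReal.ofReal_pow hr0.le, ENNReal.ofReal_mul' hr0.le, mul_pow, ← mul_div_assoc,
    mul_comm (ENNReal.ofReal r ^ n), ENNReal.mul_div_mul_left _ _ hω hω',
    div_eq_mul_inv (ENNReal.ofReal d ^ n), ENNReal.inv_div (Or.inl hrn') (Or.inl hrn),
    ← mul_div_assoc]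

variable {f : En n → En n} {A : En n →L[ℝ] En n} {x : En n} {J : ℝ≥0∞} {d : ℝ}

lemma limitDilatation_le_Kfine [NeZero n] (hA : HasFineFDerivAt f A x)
    (hJ : HasVolumeDerivAt volume volume f J x) (hd : d < 2 * ‖A‖) :
    limitDilatation n J d ≤ Kfine f x := by
  refine le_iInf₂ fun U hU => le_iInf fun hxU => ?_
  rw [← (hJ.tendsto_limitDilatation d).limsup_eq]
  refine limsup_le_limsup ?_
  filter_upwards [hA.eventually_le_ediam_image_inter hU hxU hd] with r hr
  unfold KfU
  split_ifs
  · exact le_top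
  · refine ENNReal.rpow_le_rpow ?_ inv_natCast_sub_one_nonneg
    gcongr
    exact hr

lemma Kfine_le_limitDilatation [NeZero n] (hA : HasFineFDerivAt f A x)
    (hJ : HasVolumeDerivAt volume volume f J x)
    (hpos : ∀ᶠ r in 𝓝[>] 0, volume (f '' ball x r) ≠ 0) (hd : 2 * ‖A‖ < d) :
    Kfine f x ≤ limitDilatation n J d := by
  obtain ⟨U, hU, hxU, hUε⟩ := hA ((d - 2 * ‖A‖) / 2) (by linarith)
  refine (iInf₂_le_of_le U hU (iInf_le _ hxU)).trans ?_
  rw [← (hJ.tendsto_limitDilatation d).limsup_eq]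
  refine limsup_le_limsup ?_
  filter_upwards [hpos] with r hr
  rw [KfU, if_neg hr]
  refine ENNReal.rpow_le_rpow ?_ inv_natCast_sub_one_nonneg
  gcongr
  refine (ediam_image_ball_inter_le (by linarith) hUε r).trans_eq ?_
  congr 1
  ring

lemma Kfine_eq_limitDilatation [NeZero n] (hA : HasFineFDerivAt f A x)
    (hJ : HasVolumeDerivAt volume volume f J x) (hJ0 : J ≠ 0)
    (hpos : ∀ᶠ r in 𝓝[>] 0, volume (f '' ball x r) ≠ 0) :
    Kfine f x = limitDilatation n J (2 * ‖A‖) :=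
  have hcont := (continuous_limitDilatation (n := n) hJ0).tendsto (2 * ‖A‖)
  le_antisymm
    (ge_of_tendsto (hcont.mono_left nhdsWithin_le_nhds) <|
      eventually_nhdsWithin_of_forall (s := Ioi (2 * ‖A‖)) fun _ =>
        Kfine_le_limitDilatation hA hJ hpos)
    (le_of_tendsto (hcont.mono_left nhdsWithin_le_nhds) <|
      eventually_nhdsWithin_of_forall (s := Iio (2 * ‖A‖)) fun _ =>
        limitDilatation_le_Kfine hA hJ)

lemma fineFDeriv_eq_zero_of_Kfine_lt_top (hn : 2 ≤ n) (hA : HasFineFDerivAt f A x)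
    (hJ : HasVolumeDerivAt volume volume f 0 x) (hK : Kfine f x < ∞) : A = 0 := by
  have : NeZero n := ⟨by omega⟩
  by_contra hA0
  have hpos : 0 < ‖A‖ := norm_pos_iff.2 hA0
  have hle := limitDilatation_le_Kfine hA hJ (show ‖A‖ < 2 * ‖A‖ by linarith)
  rw [limitDilatation_zero_right hn hpos] at hle
  exact hle.not_gt hK

lemma Kfine_pow_mul_Jvol_eq_of_hasFineFDerivAt (hn : 2 ≤ n) (hA : HasFineFDerivAt f A x)
    (hJ : HasVolumeDerivAt volume volume f J x) (hJtop : J ≠ ∞)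
    (hpos : ∀ᶠ r in 𝓝[>] 0, volume (f '' ball x r) ≠ 0) (hK : Kfine f x < ∞) :
    Kfine f x ^ (n - 1) * Jvol f x
      = 2 ^ n * ENNReal.ofReal (‖A‖ ^ n) / volume (ball (0 : En n) 1) := by
  have : NeZero n := ⟨by omega⟩
  have hJvol : Jvol f x = J := hJ.limsup_eq
  rcases eq_or_ne J 0 with rfl | hJ0
  · rw [hJvol, fineFDeriv_eq_zero_of_Kfine_lt_top hn hA hJ hK, norm_zero,
      zero_pow (NeZero.ne n), ENNReal.ofReal_zero, mul_zero, mul_zero, ENNReal.zero_div]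
  · rw [hJvol, Kfine_eq_limitDilatation hA hJ hJ0 hpos, limitDilatation_pow_mul hn hJ0 hJtop,
      ENNReal.ofReal_mul zero_le_two, mul_pow, ENNReal.ofReal_ofNat,
      ENNReal.ofReal_pow (norm_nonneg A)]

end Dilatation

lemma eventually_measure_image_ball_ne_zero {E F : Type*} [PseudoMetricSpace E]
    [TopologicalSpace F] [MeasurableSpace F] {ν : Measure F} [ν.IsOpenPosMeasure] {Ω : Set E}
    (hΩ : IsOpen Ω) {f : E → F} (hf : ∀ V ⊆ Ω, IsOpen V → IsOpen (f '' V)) {x : E} (hx : x ∈ Ω) :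
    ∀ᶠ r in 𝓝[>] 0, ν (f '' ball x r) ≠ 0 := by
  obtain ⟨R, hR, hRΩ⟩ := Metric.isOpen_iff.1 hΩ x hx
  filter_upwards [Ioo_mem_nhdsGT hR] with r hr
  exact ((hf _ ((ball_subset_ball hr.2.le).trans hRΩ) isOpen_ball).measure_pos ν
    ⟨f x, mem_image_of_mem f (mem_ball_self hr.1)⟩).ne'

/-- For a `W^{1,1}_loc` homeomorphism `f : Ω → Ω'` with weak gradient `g`, one has
`K^fine_f(x)^{n-1} J_f(x) = (2ⁿ/ω_n) ‖∇f(x)‖ⁿ` for a.e. `x ∈ Ω` with `K^fine_f(x) < ∞`. -/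
theorem Kfine_pow_mul_Jvol_eq (hn : 2 ≤ n) (Ω Ω' : Set (En n)) (hΩ : IsOpen Ω)
    (hΩ' : IsOpen Ω') (f : En n → En n) (g : En n → (En n →L[ℝ] En n))
    (hcont : ContinuousOn f Ω) (hinj : InjOn f Ω) (himg : f '' Ω = Ω')
    (hopen : ∀ V ⊆ Ω, IsOpen V → IsOpen (f '' V))
    (hfloc : LocallyIntegrableOn f Ω)
    (hgloc : LocallyIntegrableOn (fun x => ‖g x‖) Ω)
    (hweak : HasWeakGradOn f g Ω) :
    ∀ᵐ x ∂(volume.restrict Ω), Kfine f x < ∞ →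
      Kfine f x ^ (n - 1) * Jvol f x
        = 2 ^ n * ENNReal.ofReal (‖g x‖ ^ n) / volume (ball (0 : En n) 1) := by
  have hline : ∀ v, HasWeakLineDerivOn volume f (fun y => g y v) v Ω := hweak.hasWeakLineDerivOn
  have hgint : LocallyIntegrableOn g Ω := locallyIntegrableOn_of_forall_apply fun v hv =>
    (hline v).locallyIntegrableOn_of_injOn hΩ hcont hinj hv
  filter_upwards [ae_restrict_mem hΩ.measurableSet, ae_isLebesguePoint hΩ hgint,
    ae_exists_hasVolumeDerivAt (ν := volume) hΩ hcont hinj] with x hx hgx ⟨J, hJ, hvol⟩ hK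
  exact Kfine_pow_mul_Jvol_eq_of_hasFineFDerivAt hn
    (hasFineFDerivAt_of_isLebesguePoint hn hΩ hx hcont hline hgint hgx) hvol hJ
    (eventually_measure_image_ball_ne_zero hΩ hopen hx) hK

end
end

section
/- Let Ω, Ω' ⊂ ℝ^n be open, n ≥ 2, and let f ∈ W^{1,1}_{loc}(Ω; Ω') be a homeomorphism. Then for a.e. x ∈ Ω at which f is differentiable and 0 < J_f(x) < ∞, one has K_f(x) = K^{fine}_f(x). -/
open MeasureTheory Metric Set Filter ENNReal NNReal Topology

noncomputable section

variable {n : ℕ}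

/-! Differentiability at `x` makes `f (ball x r ∩ U)` a perturbation of `L (ball x r ∩ U)`,
`L = f'(x)`, with error `o(r)`. Hence, if every ball in `ball x r` of radius comparable to `r` meets
`U`, the diameter of `f (ball x r ∩ U)` is asymptotic to `2 ‖L‖ r`, whatever `U` is. When `L ≠ 0`,
which `0 < J_f(x)` ensures, the upper limit of `K_{f,U}(x, r)` is therefore the same for all such
`U`, in particular for the whole space.

A 1-finely open set has this density property because a ball of radius `ρ` has capacity at least
a multiple of `ρ ^ (n - 1)`, so that the complement of `U` cannot contain a ball of radius
comparable to `r`. For the capacity bound, a bump function `ψ` is moved to infinity along a unit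
vector `e`: the difference `ψ - ψ(· - t e)` is the derivative in direction `e` of a test function
bounded by the diameter of the support of `ψ`, uniformly in `t`. -/

section ExtendedReals

variable {α : Type*} {l : Filter α} {u v : α → ℝ≥0∞}

lemma tendsto_ofReal_of_forall_eventually_le {a : ℝ}
    (hle : ∀ η > 0, ∀ᶠ i in l, ENNReal.ofReal (a - η) ≤ u i)
    (hge : ∀ η > 0, ∀ᶠ i in l, u i ≤ ENNReal.ofReal (a + η)) :
    Tendsto u l (𝓝 (ENNReal.ofReal a)) := by
  have hid : Tendsto (fun η : ℝ => η) (𝓝[>] 0) (𝓝 0) := nhdsWithin_le_nhds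
  have hsub : Tendsto (fun η => ENNReal.ofReal (a - η)) (𝓝[>] 0) (𝓝 (ENNReal.ofReal a)) :=
    ENNReal.tendsto_ofReal (by simpa using hid.const_sub a)
  have hadd : Tendsto (fun η => ENNReal.ofReal (a + η)) (𝓝[>] 0) (𝓝 (ENNReal.ofReal a)) :=
    ENNReal.tendsto_ofReal (by simpa using hid.const_add a)
  exact tendsto_of_le_liminf_of_limsup_le
    (le_of_tendsto hsub (eventually_mem_nhdsWithin.mono fun η hη =>
      le_liminf_of_le (by isBoundedDefault) (hle η hη)))
    (ge_of_tendsto hadd (eventually_mem_nhdsWithin.mono fun η hη =>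
      limsup_le_of_le (by isBoundedDefault) (hge η hη)))

lemma limsup_mul_eq_mul_limsup_of_tendsto [l.NeBot] {a : ℝ≥0∞} (hu : Tendsto u l (𝓝 a))
    (ha0 : a ≠ 0) (ha : a ≠ ∞) : limsup (u * v) l = a * limsup v l := by
  refine le_antisymm ?_ ?_
  · rw [← hu.limsup_eq]
    exact ENNReal.limsup_mul_le' (.inl (hu.limsup_eq ▸ ha0)) (.inl (hu.limsup_eq ▸ ha))
  · rw [← hu.liminf_eq, mul_comm, mul_comm u]
    exact ENNReal.le_limsup_mul

end ExtendedReals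

section TranslatePrimitive

variable {E F : Type*} [NormedAddCommGroup E] [NormedSpace ℝ E] [NormedAddCommGroup F]
  [NormedSpace ℝ F] {ψ : E → F} {e : E}

/-- The integral of `ψ` over the segment from `z` to `z - t • e`, parametrized by `[0, t]`. It
serves as a test function whose derivative in direction `e` is `ψ - ψ(· - t • e)`. -/
def translatePrimitive (ψ : E → F) (e : E) (t : ℝ) (z : E) : F :=
  ∫ s in (0 : ℝ)..t, ψ (z - s • e)

lemma hasFDerivAt_translatePrimitive (hψ : ContDiff ℝ 1 ψ) (hc : HasCompactSupport ψ) (e : E)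
    (t : ℝ) (z : E) :
    HasFDerivAt (translatePrimitive ψ e t) (translatePrimitive (fderiv ℝ ψ) e t z) z := by
  have hψc := hψ.continuous
  have hψ' : Continuous (fderiv ℝ ψ) := hψ.continuous_fderiv one_ne_zero
  obtain ⟨C, hC⟩ := (hc.fderiv (𝕜 := ℝ)).exists_bound_of_continuous hψ'
  refine intervalIntegral.hasFDerivAt_integral_of_dominated_of_fderiv_le
    (F' := fun z s => fderiv ℝ ψ (z - s • e)) (bound := fun _ => C) univ_mem
    (.of_forall fun x => ?_) ?_ ?_ (.of_forall fun s _ x _ => hC _) intervalIntegrable_const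
    (.of_forall fun s _ x _ => ?_)
  · exact (by fun_prop : Continuous fun s : ℝ => ψ (x - s • e)).aestronglyMeasurable
  · exact (by fun_prop : Continuous fun s : ℝ => ψ (z - s • e)).intervalIntegrable _ _
  · exact (by fun_prop : Continuous fun s : ℝ => fderiv ℝ ψ (z - s • e)).aestronglyMeasurable
  · exact (hψ.differentiable one_ne_zero (x - s • e)).hasFDerivAt.comp x
      ((hasFDerivAt_id x).sub_const (s • e))

lemma contDiff_translatePrimitive (hψ : ContDiff ℝ 1 ψ) (hc : HasCompactSupport ψ) (e : E)
    (t : ℝ) : ContDiff ℝ 1 (translatePrimitive ψ e t) := by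
  have hψ' : Continuous (fderiv ℝ ψ) := hψ.continuous_fderiv one_ne_zero
  refine contDiff_one_iff_hasFDerivAt.2 ⟨_, ?_, hasFDerivAt_translatePrimitive hψ hc e t⟩
  exact intervalIntegral.continuous_parametric_intervalIntegral_of_continuous'
    (f := fun z s => fderiv ℝ ψ (z - s • e))
    (hψ'.comp (by fun_prop : Continuous fun q : E × ℝ => q.1 - q.2 • e)) 0 t

lemma fderiv_translatePrimitive_apply [CompleteSpace F] (hψ : ContDiff ℝ 1 ψ)
    (hc : HasCompactSupport ψ) (e : E) (t : ℝ) (z : E) :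
    fderiv ℝ (translatePrimitive ψ e t) z e = ψ z - ψ (z - t • e) := by
  have hcont : Continuous fun s : ℝ => fderiv ℝ ψ (z - s • e) :=
    (hψ.continuous_fderiv one_ne_zero).comp (by fun_prop)
  have hderiv (s : ℝ) :
      HasDerivAt (fun s : ℝ => -ψ (z - s • e)) (fderiv ℝ ψ (z - s • e) e) s := by
    have hline : HasDerivAt (fun s : ℝ => z - s • e) (-e) s := by
      simpa using ((hasDerivAt_id s).smul_const e).const_sub z
    simpa [Function.comp_def] using
      ((hψ.differentiable one_ne_zero _).hasFDerivAt.comp_hasDerivAt s hline).fun_neg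
  calc fderiv ℝ (translatePrimitive ψ e t) z e
      = ∫ s in (0 : ℝ)..t, fderiv ℝ ψ (z - s • e) e := by
        rw [(hasFDerivAt_translatePrimitive hψ hc e t z).fderiv, translatePrimitive,
          ContinuousLinearMap.intervalIntegral_apply (hcont.intervalIntegrable _ _)]
    _ = -ψ (z - t • e) - -ψ (z - (0 : ℝ) • e) :=
        intervalIntegral.integral_eq_sub_of_hasDerivAt (fun s _ => hderiv s)
          ((hcont.clm_apply continuous_const).intervalIntegrable _ _)
    _ = ψ z - ψ (z - t • e) := by rw [zero_smul, sub_zero]; abel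

lemma hasCompactSupport_translatePrimitive (hc : HasCompactSupport ψ) (e : E) (t : ℝ) :
    HasCompactSupport (translatePrimitive ψ e t) := by
  have hsegment : IsCompact ((fun s : ℝ => s • e) '' uIcc 0 t) :=
    isCompact_uIcc.image (by fun_prop)
  refine .intro (hc.isCompact.add hsegment) fun z hz => ?_
  refine intervalIntegral.integral_zero_ae (.of_forall fun s hs => ?_)
  refine image_eq_zero_of_notMem_tsupport fun hψ => hz ?_
  exact ⟨_, hψ, _, mem_image_of_mem _ (uIoc_subset_uIcc hs), sub_add_cancel _ _⟩

lemma norm_translatePrimitive_le {C : ℝ} (hC : ∀ z, ‖ψ z‖ ≤ C)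
    (hb : Bornology.IsBounded (Function.support ψ)) (he : ‖e‖ = 1) (t : ℝ) (z : E) :
    ‖translatePrimitive ψ e t z‖ ≤ C * diam (Function.support ψ) := by
  set S : Set ℝ := {s | ψ (z - s • e) ≠ 0}
  have hiso : Isometry fun s : ℝ => z - s • e := .of_dist_eq fun s s' => by
    rw [dist_sub_left, dist_eq_norm, ← sub_smul, norm_smul, he, mul_one, Real.dist_eq,
      Real.norm_eq_abs]
  have hvol : volume (uIoc 0 t ∩ S) ≤ ediam (Function.support ψ) :=
    calc volume (uIoc 0 t ∩ S) ≤ ediam S :=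
          (measure_mono inter_subset_right).trans (Real.volume_le_diam S)
      _ = ediam ((fun s : ℝ => z - s • e) '' S) := (hiso.ediam_image S).symm
      _ ≤ ediam (Function.support ψ) := ediam_mono (image_subset_iff.2 fun _ => id)
  have hfin : ediam (Function.support ψ) ≠ ∞ := isBounded_iff_ediam_ne_top.1 hb
  rw [translatePrimitive, intervalIntegral.norm_intervalIntegral_eq,
    setIntegral_eq_of_subset_of_forall_sdiff_eq_zero measurableSet_uIoc
      (inter_subset_left (t := S)) fun s hs => not_not.1 fun h => hs.2 ⟨hs.1, h⟩]
  calc ‖∫ s in uIoc 0 t ∩ S, ψ (z - s • e)‖ ≤ C * volume.real (uIoc 0 t ∩ S) :=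
        norm_setIntegral_le_of_norm_le_const (hvol.trans_lt hfin.lt_top) fun s _ => hC _
    _ ≤ C * diam (Function.support ψ) := by
        have hC0 : 0 ≤ C := (norm_nonneg _).trans (hC 0)
        gcongr
        exact ENNReal.toReal_mono hfin hvol

lemma tendsto_integral_mul_translate_atTop [MeasurableSpace E] [BorelSpace E] {μ : Measure E}
    {u ψ : E → ℝ} (hu : Integrable u μ) (hψ : Continuous ψ) {C : ℝ} (hC : ∀ z, ‖ψ z‖ ≤ C)
    (h0 : Tendsto ψ (Bornology.cobounded E) (𝓝 0)) (he : e ≠ 0) :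
    Tendsto (fun t : ℝ => ∫ z, u z * ψ (z - t • e) ∂μ) atTop (𝓝 0) := by
  rw [← integral_zero E ℝ (μ := μ)]
  refine tendsto_integral_filter_of_dominated_convergence (fun z => ‖u z‖ * C)
    (.of_forall fun t => ?_) (.of_forall fun t => .of_forall fun z => ?_) (hu.norm.mul_const C)
    (.of_forall fun z => ?_)
  · exact hu.aestronglyMeasurable.mul
      (by fun_prop : Continuous fun z => ψ (z - t • e)).aestronglyMeasurable
  · rw [norm_mul]
    gcongr
    exact hC _
  · have hescape : Tendsto (fun t : ℝ => z - t • e) atTop (Bornology.cobounded E) := by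
      refine tendsto_norm_atTop_iff_cobounded.1 ?_
      have hte : Tendsto (fun t : ℝ => t * ‖e‖ - ‖z‖) atTop atTop :=
        tendsto_atTop_add_const_right _ _ (tendsto_id.atTop_mul_const (norm_pos_iff.2 he))
      refine tendsto_atTop_mono (fun t => ?_) hte
      calc t * ‖e‖ - ‖z‖ ≤ ‖t • e‖ - ‖z‖ := by
            rw [norm_smul]
            gcongr
            exact Real.le_norm_self t
        _ ≤ ‖z - t • e‖ := by rw [norm_sub_rev]; exact norm_sub_norm_le _ _
    simpa using (h0.comp hescape).const_mul (u z)

end TranslatePrimitive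

section Capacity

lemma IsWeakGrad.abs_integral_mul_le (hn : n ≠ 0) {u : En n → ℝ} {g : En n → (En n →L[ℝ] ℝ)}
    (hw : IsWeakGrad u g) (hu : Integrable u) (hg : Integrable fun x => ‖g x‖) {ψ : En n → ℝ}
    (hψ : ContDiff ℝ 1 ψ) (hc : HasCompactSupport ψ) {C : ℝ} (hC : ∀ z, ‖ψ z‖ ≤ C) :
    |∫ x, u x * ψ x| ≤ C * diam (Function.support ψ) * ∫ x, ‖g x‖ := by
  let e : En n := EuclideanSpace.single ⟨0, Nat.pos_of_ne_zero hn⟩ 1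
  have he : ‖e‖ = 1 := by simp [e]
  have hψc := hψ.continuous
  have hb : Bornology.IsBounded (Function.support ψ) :=
    hc.isCompact.isBounded.subset (subset_tsupport ψ)
  have hint (t : ℝ) : Integrable fun x => u x * ψ (x - t • e) :=
    hu.mul_bdd (by fun_prop : Continuous fun x => ψ (x - t • e)).aestronglyMeasurable
      (.of_forall fun x => hC _)
  have hbound (t : ℝ) : |(∫ x, u x * ψ x) - ∫ x, u x * ψ (x - t • e)| ≤
      C * diam (Function.support ψ) * ∫ x, ‖g x‖ := by
    have hweak := hw _ (contDiff_translatePrimitive hψ hc e t)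
      (hasCompactSupport_translatePrimitive hc e t) e
    simp_rw [fderiv_translatePrimitive_apply hψ hc, mul_sub] at hweak
    rw [integral_sub (by simpa using hint 0) (hint t)] at hweak
    rw [hweak, abs_neg, ← integral_const_mul, ← Real.norm_eq_abs]
    refine norm_integral_le_of_norm_le (hg.const_mul _) (.of_forall fun x => ?_)
    rw [norm_mul]
    gcongr
    · exact (norm_nonneg _).trans (norm_translatePrimitive_le hC hb he t x)
    · exact norm_translatePrimitive_le hC hb he t x
    · simpa [he] using (g x).le_opNorm e
  have hvanish : Tendsto ψ (Bornology.cobounded (En n)) (𝓝 0) := by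
    rw [cobounded_eq_cocompact]
    exact hc.is_zero_at_infty
  have hlim := (tendsto_integral_mul_translate_atTop hu hψc hC hvanish
    (norm_ne_zero_iff.1 (he ▸ one_ne_zero))).const_sub (∫ x, u x * ψ x)
  rw [sub_zero] at hlim
  exact le_of_tendsto' hlim.abs hbound

lemma IsWeakGrad.volume_real_ball_half_le (hn : n ≠ 0) {u : En n → ℝ}
    {g : En n → (En n →L[ℝ] ℝ)} (hw : IsWeakGrad u g) (hu : Integrable u)
    (hg : Integrable fun x => ‖g x‖) {p : En n} {ρ : ℝ} (hρ : 0 < ρ)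
    (h1 : ∀ x ∈ ball p ρ, 1 ≤ u x) :
    volume.real (ball p (ρ / 2)) ≤ 2 * ρ * ∫ x, ‖g x‖ := by
  let ψ : ContDiffBump p := ⟨ρ / 2, ρ, by positivity, by linarith⟩
  have hψ1 (x : En n) : ‖ψ x‖ ≤ 1 := by
    rw [Real.norm_of_nonneg ψ.nonneg]
    exact ψ.le_one
  have hψint : Integrable ψ := ψ.continuous.integrable_of_hasCompactSupport ψ.hasCompactSupport
  calc volume.real (ball p (ρ / 2)) ≤ volume.real (closedBall p (ρ / 2)) :=
        measureReal_mono ball_subset_closedBall measure_closedBall_lt_top.ne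
    _ ≤ ∫ x, ψ x := ψ.measure_closedBall_le_integral volume
    _ ≤ ∫ x, u x * ψ x := by
        refine integral_mono hψint
          (hu.mul_bdd ψ.continuous.aestronglyMeasurable (.of_forall hψ1)) fun x => ?_
        by_cases hx : x ∈ ball p ρ
        · exact le_mul_of_one_le_left ψ.nonneg (h1 x hx)
        · simp [ψ.zero_of_le_dist (x := x) (not_lt.1 hx)]
    _ ≤ 1 * diam (Function.support ψ) * ∫ x, ‖g x‖ :=
        (le_abs_self _).trans
          (hw.abs_integral_mul_le hn hu hg ψ.contDiff ψ.hasCompactSupport hψ1)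
    _ ≤ 2 * ρ * ∫ x, ‖g x‖ := by
        rw [one_mul, ψ.support_eq]
        gcongr
        exact diam_ball hρ.le

lemma volume_ball_half_div_le_cap1_ball (hn : n ≠ 0) (p : En n) {ρ : ℝ} (hρ : 0 < ρ) :
    volume (ball p (ρ / 2)) / ENNReal.ofReal (2 * ρ) ≤ cap1 (ball p ρ) := by
  refine le_sInf ?_
  rintro _ ⟨u, g, hu, hg, hw, ⟨V, -, hpV, h1⟩, rfl⟩
  refine ENNReal.div_le_of_le_mul' ?_
  rw [← ENNReal.ofReal_mul (by positivity), ← ofReal_measureReal measure_ball_lt_top.ne]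
  refine ENNReal.ofReal_le_ofReal ?_
  refine (hw.volume_real_ball_half_le hn hu hg hρ fun x hx => h1 x (hpV hx)).trans ?_
  gcongr
  exact le_add_of_nonneg_left (integral_nonneg fun _ => abs_nonneg _)

lemma mul_pow_le_cap1_ball (hn : n ≠ 0) (p : En n) {r ε : ℝ} (hr : 0 < r) (hε : 0 < ε) :
    volume (ball (0 : En n) (ε / 2)) / ENNReal.ofReal (2 * ε) * ENNReal.ofReal (r ^ (n - 1)) ≤
      cap1 (ball p (r * ε)) := by
  have : Nonempty (Fin n) := ⟨⟨0, Nat.pos_of_ne_zero hn⟩⟩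
  have hvol : volume (ball p (r * ε / 2)) =
      volume (ball (0 : En n) (ε / 2)) * ENNReal.ofReal (r ^ (n - 1)) * ENNReal.ofReal r := by
    rw [mul_div_assoc, Measure.addHaar_ball_mul _ _ hr.le, finrank_euclideanSpace_fin, mul_assoc,
      ← ENNReal.ofReal_mul (by positivity), pow_sub_one_mul hn, mul_comm]
  have hρ : ENNReal.ofReal (2 * (r * ε)) = ENNReal.ofReal (2 * ε) * ENNReal.ofReal r := by
    rw [← ENNReal.ofReal_mul (by positivity), mul_assoc, mul_comm r]
  calc volume (ball (0 : En n) (ε / 2)) / ENNReal.ofReal (2 * ε) * ENNReal.ofReal (r ^ (n - 1))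
      = volume (ball p (r * ε / 2)) / ENNReal.ofReal (2 * (r * ε)) := by
        rw [hvol, hρ, ENNReal.mul_div_mul_right _ _ (ENNReal.ofReal_pos.2 hr).ne' ofReal_ne_top,
          ENNReal.mul_div_right_comm]
    _ ≤ cap1 (ball p (r * ε)) := volume_ball_half_div_le_cap1_ball hn p (mul_pos hr hε)

end Capacity

section AsymptoticDensity

/-- `U` is asymptotically dense at `x` if, for every `ε > 0`, each ball of radius `r * ε` contained
in `ball x r` meets `U` once `r > 0` is small. In other words, the complement of `U` is not porous
at `x`. -/
def AsymptoticallyDenseAt {X : Type*} [PseudoMetricSpace X] (U : Set X) (x : X) : Prop :=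
  ∀ ε > 0, ∀ᶠ r in 𝓝[>] (0 : ℝ), ∀ p, ball p (r * ε) ⊆ ball x r → (U ∩ ball p (r * ε)).Nonempty

lemma finelyOpen1_univ : FinelyOpen1 (univ : Set (En n)) := fun _ _ => by
  simp [cap1_empty]

lemma FinelyOpen1.asymptoticallyDenseAt (hn : n ≠ 0) {U : Set (En n)} (hU : FinelyOpen1 U)
    {x : En n} (hx : x ∈ U) : AsymptoticallyDenseAt U x := by
  intro ε hε
  have hpos : 0 < volume (ball (0 : En n) (ε / 2)) / ENNReal.ofReal (2 * ε) :=
    ENNReal.div_pos (measure_ball_pos _ _ (half_pos hε)).ne' ofReal_ne_top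
  filter_upwards [(hU x hx).eventually_lt_const hpos, self_mem_nhdsWithin]
    with r hcap (hr : 0 < r) p hp
  by_contra hempty
  have hsub : ball p (r * ε) ⊆ Uᶜ ∩ ball x r := fun y hy =>
    ⟨fun hyU => hempty ⟨y, hyU, hy⟩, hp hy⟩
  rw [ENNReal.div_lt_iff (.inl (ENNReal.ofReal_pos.2 (by positivity)).ne')
    (.inl ofReal_ne_top)] at hcap
  exact hcap.not_ge ((mul_pow_le_cap1_ball hn p hr hε).trans (cap1_mono hsub))

end AsymptoticDensity

section Differentiable

variable {E F : Type*} [NormedAddCommGroup E] [NormedSpace ℝ E] [NormedAddCommGroup F]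
  [NormedSpace ℝ F] {f : E → F} {L : E →L[ℝ] F} {x : E}

lemma eventually_forall_ball_norm_sub_sub_le (hf : HasFDerivAt f L x) {η : ℝ} (hη : 0 < η) :
    ∀ᶠ r in 𝓝[>] (0 : ℝ), ∀ y ∈ ball x r, ‖f y - f x - L (y - x)‖ ≤ η * r := by
  obtain ⟨δ, hδ, h⟩ := Metric.eventually_nhds_iff_ball.1
    ((hasFDerivAt_iff_isLittleO.1 hf).def hη)
  filter_upwards [Ioo_mem_nhdsGT hδ] with r hr y hy
  refine (h y (ball_subset_ball hr.2.le hy)).trans ?_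
  gcongr
  exact (mem_ball_iff_norm.1 hy).le

lemma eventually_image_ball_subset_closedBall (hf : HasFDerivAt f L x) {η : ℝ} (hη : 0 < η) :
    ∀ᶠ r in 𝓝[>] (0 : ℝ), f '' ball x r ⊆ closedBall (f x) ((‖L‖ + η) * r) := by
  filter_upwards [eventually_forall_ball_norm_sub_sub_le hf hη] with r hr
  rintro _ ⟨y, hy, rfl⟩
  rw [mem_closedBall_iff_norm]
  calc ‖f y - f x‖ ≤ ‖L (y - x)‖ + ‖f y - f x - L (y - x)‖ := norm_le_norm_add_norm_sub' _ _
    _ ≤ ‖L‖ * r + η * r := by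
        gcongr
        · exact L.le_opNorm_of_le (mem_ball_iff_norm.1 hy).le
        · exact hr y hy
    _ = (‖L‖ + η) * r := by ring

lemma AsymptoticallyDenseAt.eventually_exists_norm_sub_sub_smul_le {U : Set E}
    (hU : AsymptoticallyDenseAt U x) (hf : HasFDerivAt f L x) {v : E} (hv : ‖v‖ < 1) {η : ℝ}
    (hη : 0 < η) :
    ∀ᶠ r in 𝓝[>] (0 : ℝ), ∃ y ∈ ball x r ∩ U, ‖f y - f x - r • L v‖ ≤ η * r := by
  obtain ⟨ε, hε, hεv, hεη⟩ : ∃ ε > 0, ε ≤ 1 - ‖v‖ ∧ ‖L‖ * ε ≤ η / 2 := by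
    have hlim : Tendsto (fun ε : ℝ => ‖L‖ * ε) (𝓝[>] 0) (𝓝 0) := by
      refine tendsto_nhdsWithin_of_tendsto_nhds ?_
      simpa using (tendsto_id (α := ℝ) (x := 𝓝 0)).const_mul ‖L‖
    obtain ⟨ε, hε, hεη⟩ := ((eventually_mem_set.2 (Ioc_mem_nhdsGT (sub_pos.2 hv))).and
      (hlim.eventually_le_const (half_pos hη))).exists
    exact ⟨ε, hε.1, hε.2, hεη⟩
  filter_upwards [hU ε hε, eventually_forall_ball_norm_sub_sub_le hf (half_pos hη),
    self_mem_nhdsWithin] with r hmeet hr (hr0 : 0 < r)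
  have hsub : ball (x + r • v) (r * ε) ⊆ ball x r := by
    refine ball_subset_ball' ?_
    rw [dist_self_add_left, norm_smul, Real.norm_of_nonneg hr0.le]
    nlinarith
  obtain ⟨y, hyU, hy⟩ := hmeet _ hsub
  refine ⟨y, ⟨hsub hy, hyU⟩, ?_⟩
  calc ‖f y - f x - r • L v‖ = ‖(f y - f x - L (y - x)) + L (y - (x + r • v))‖ := by
        congr 1
        simp only [map_sub, map_add, map_smul]
        abel
    _ ≤ η / 2 * r + ‖L‖ * (r * ε) := by
        refine norm_add_le_of_le (hr y (hsub hy)) (L.le_opNorm_of_le ?_)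
        exact (mem_ball_iff_norm.1 hy).le
    _ ≤ η * r := by nlinarith

lemma eventually_ediam_image_ball_le (hf : HasFDerivAt f L x) {η : ℝ} (hη : 0 < η) :
    ∀ᶠ r in 𝓝[>] (0 : ℝ), ediam (f '' ball x r) ≤ ENNReal.ofReal ((2 * ‖L‖ + η) * r) := by
  filter_upwards [eventually_image_ball_subset_closedBall hf (half_pos hη), self_mem_nhdsWithin]
    with r hr (hr0 : 0 < r)
  calc ediam (f '' ball x r) ≤ ediam (closedBall (f x) ((‖L‖ + η / 2) * r)) := ediam_mono hr
    _ ≤ 2 * ENNReal.ofReal ((‖L‖ + η / 2) * r) := by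
        rw [← Metric.closedEBall_ofReal (by positivity)]
        exact ediam_closedEBall_le
    _ = ENNReal.ofReal ((2 * ‖L‖ + η) * r) := by
        rw [← ENNReal.ofReal_ofNat 2, ← ENNReal.ofReal_mul zero_le_two]
        ring_nf

lemma AsymptoticallyDenseAt.eventually_le_ediam_image_ball_inter {U : Set E}
    (hU : AsymptoticallyDenseAt U x) (hf : HasFDerivAt f L x) {η : ℝ} (hη : 0 < η) :
    ∀ᶠ r in 𝓝[>] (0 : ℝ),
      ENNReal.ofReal ((2 * ‖L‖ - η) * r) ≤ ediam (f '' (ball x r ∩ U)) := by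
  obtain ⟨v, hv1, hv⟩ := L.exists_lt_apply_of_lt_opNorm (by linarith : ‖L‖ - η / 4 < ‖L‖)
  filter_upwards [hU.eventually_exists_norm_sub_sub_smul_le hf hv1 (by positivity : 0 < η / 4),
    hU.eventually_exists_norm_sub_sub_smul_le hf ((norm_neg v).trans_lt hv1)
      (by positivity : 0 < η / 4), self_mem_nhdsWithin]
    with r ⟨y, hy, hyv⟩ ⟨z, hz, hzv⟩ (hr0 : 0 < r)
  refine le_trans ?_ (edist_le_ediam_of_mem (mem_image_of_mem f hy) (mem_image_of_mem f hz))
  rw [edist_dist, dist_eq_norm]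
  refine ENNReal.ofReal_le_ofReal ?_
  have hsplit : (2 * r) • L v =
      (f y - f z) - (f y - f x - r • L v) + (f z - f x - r • L (-v)) := by
    rw [map_neg]
    module
  have htriangle : 2 * r * ‖L v‖ ≤ ‖f y - f z‖ + η / 4 * r + η / 4 * r :=
    calc 2 * r * ‖L v‖ = ‖(2 * r) • L v‖ := by
          rw [norm_smul, Real.norm_of_nonneg (by positivity)]
      _ ≤ ‖f y - f z‖ + η / 4 * r + η / 4 * r :=
          hsplit ▸ norm_add_le_of_le (norm_sub_le_of_le le_rfl hyv) hzv
  nlinarith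

lemma AsymptoticallyDenseAt.tendsto_ediam_image_ball_inter_div {U : Set E}
    (hU : AsymptoticallyDenseAt U x) (hf : HasFDerivAt f L x) :
    Tendsto (fun r : ℝ => ediam (f '' (ball x r ∩ U)) / ENNReal.ofReal r) (𝓝[>] 0)
      (𝓝 (ENNReal.ofReal (2 * ‖L‖))) := by
  refine tendsto_ofReal_of_forall_eventually_le (fun η hη => ?_) fun η hη => ?_
  · filter_upwards [hU.eventually_le_ediam_image_ball_inter hf hη, self_mem_nhdsWithin]
      with r hr (hr0 : 0 < r)
    rw [ENNReal.le_div_iff_mul_le (.inl (ENNReal.ofReal_pos.2 hr0).ne') (.inl ofReal_ne_top),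
      ← ENNReal.ofReal_mul' hr0.le]
    exact hr
  · filter_upwards [eventually_ediam_image_ball_le hf hη, self_mem_nhdsWithin]
      with r hr (hr0 : 0 < r)
    refine ENNReal.div_le_of_le_mul ?_
    rw [← ENNReal.ofReal_mul' hr0.le]
    exact (ediam_mono (image_mono inter_subset_left)).trans hr

end Differentiable

section Dilatation

variable {f : En n → En n} {L : En n →L[ℝ] En n} {x : En n} {U : Set (En n)}

lemma Jvol_le_opNorm_pow (hf : HasFDerivAt f L x) : Jvol f x ≤ ENNReal.ofReal (‖L‖ ^ n) := by
  have hle (η : ℝ) (hη : 0 < η) : Jvol f x ≤ ENNReal.ofReal ((‖L‖ + η) ^ n) := by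
    refine limsup_le_of_le (by isBoundedDefault) ?_
    filter_upwards [eventually_image_ball_subset_closedBall hf hη, self_mem_nhdsWithin]
      with r hsub (hr : 0 < r)
    refine ENNReal.div_le_of_le_mul ?_
    calc volume (f '' ball x r) ≤ volume (closedBall (f x) ((‖L‖ + η) * r)) := measure_mono hsub
      _ = ENNReal.ofReal ((‖L‖ + η) ^ n) * volume (ball x r) := by
          rw [Measure.addHaar_closedBall _ _ (by positivity), Measure.addHaar_ball_of_pos _ _ hr,
            mul_pow, ENNReal.ofReal_mul (by positivity), mul_assoc, finrank_euclideanSpace_fin]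
  have hlim : Tendsto (fun η : ℝ => ENNReal.ofReal ((‖L‖ + η) ^ n)) (𝓝[>] 0)
      (𝓝 (ENNReal.ofReal (‖L‖ ^ n))) := by
    refine ENNReal.tendsto_ofReal (tendsto_nhdsWithin_of_tendsto_nhds ?_)
    simpa using (by fun_prop : Continuous fun η : ℝ => (‖L‖ + η) ^ n).tendsto 0
  exact ge_of_tendsto hlim (eventually_mem_nhdsWithin.mono hle)

lemma ne_zero_of_Jvol_pos (hn : n ≠ 0) (hf : HasFDerivAt f L x) (hJ : 0 < Jvol f x) : L ≠ 0 := by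
  rintro rfl
  simpa [hn] using hJ.trans_le (Jvol_le_opNorm_pow hf)

lemma KfU_eq_mul (hn : 2 ≤ n) {r : ℝ} (hr : 0 < r) (hU : ediam (f '' (ball x r ∩ U)) ≠ 0) :
    KfU f U x r =
      ((ediam (f '' (ball x r ∩ U)) / ENNReal.ofReal r) ^ n) ^ ((n : ℝ) - 1)⁻¹ *
        (ENNReal.ofReal r ^ n / volume (f '' ball x r)) ^ ((n : ℝ) - 1)⁻¹ := by
  have hexp : 0 < ((n : ℝ) - 1)⁻¹ := inv_pos.2 (sub_pos.2 (by exact_mod_cast hn))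
  have hr0 : ENNReal.ofReal r ≠ 0 := (ENNReal.ofReal_pos.2 hr).ne'
  have hunfold : KfU f U x r =
      (ediam (f '' (ball x r ∩ U)) ^ n / volume (f '' ball x r)) ^ ((n : ℝ) - 1)⁻¹ := by
    unfold KfU
    split_ifs with hvol
    -- With a positive numerator and a positive exponent, division by zero already gives `∞`.
    · rw [hvol, ENNReal.div_zero (pow_ne_zero n hU), ENNReal.top_rpow_of_pos hexp]
    · rfl
  rw [hunfold, ← ENNReal.mul_rpow_of_nonneg _ _ hexp.le, ← mul_div_assoc, ← mul_pow,
    ENNReal.div_mul_cancel hr0 ofReal_ne_top]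

lemma AsymptoticallyDenseAt.limsup_KfU (hU : AsymptoticallyDenseAt U x) (hn : 2 ≤ n)
    (hf : HasFDerivAt f L x) (hL : L ≠ 0) :
    limsup (KfU f U x) (𝓝[>] 0) =
      (ENNReal.ofReal (2 * ‖L‖) ^ n) ^ ((n : ℝ) - 1)⁻¹ *
        limsup (fun r => (ENNReal.ofReal r ^ n / volume (f '' ball x r)) ^ ((n : ℝ) - 1)⁻¹)
          (𝓝[>] 0) := by
  have hdiam := hU.tendsto_ediam_image_ball_inter_div hf
  have hlim0 : ENNReal.ofReal (2 * ‖L‖) ≠ 0 :=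
    (ENNReal.ofReal_pos.2 (mul_pos two_pos (norm_pos_iff.2 hL))).ne'
  have hexp : 0 ≤ ((n : ℝ) - 1)⁻¹ :=
    inv_nonneg.2 (sub_nonneg.2 (by exact_mod_cast one_le_two.trans hn))
  have hcoef := (hdiam.ennrpow_const n).ennrpow_const ((n : ℝ) - 1)⁻¹
  simp only [ENNReal.rpow_natCast] at hcoef
  rw [← limsup_mul_eq_mul_limsup_of_tendsto hcoef
    (ENNReal.rpow_pos (ENNReal.pow_pos hlim0.bot_lt n) (ENNReal.pow_ne_top ofReal_ne_top)).ne'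
    (ENNReal.rpow_ne_top_of_nonneg hexp (ENNReal.pow_ne_top ofReal_ne_top))]
  refine limsup_congr ?_
  filter_upwards [hdiam.eventually_ne hlim0, self_mem_nhdsWithin] with r hdiam0 hr
  exact KfU_eq_mul hn hr fun h => hdiam0 (by rw [h, ENNReal.zero_div])

theorem Kmetric_eq_Kfine_general (hn : 2 ≤ n) (hf : HasFDerivAt f L x) (hL : L ≠ 0) :
    Kmetric f x = Kfine f x := by
  have hlimsup {U : Set (En n)} (hU : FinelyOpen1 U) (hx : x ∈ U) :
      limsup (KfU f U x) (𝓝[>] 0) = Kmetric f x :=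
    ((hU.asymptoticallyDenseAt (by omega) hx).limsup_KfU hn hf hL).trans
      ((finelyOpen1_univ.asymptoticallyDenseAt (by omega) (mem_univ x)).limsup_KfU hn hf hL).symm
  refine le_antisymm (le_iInf₂ fun U hU => le_iInf fun hx => ?_) ?_
  · exact (hlimsup hU hx).ge
  · exact iInf₂_le_of_le univ finelyOpen1_univ (iInf_le _ (mem_univ x))

end Dilatation

/-- For a `W^{1,1}_loc` homeomorphism `f : Ω → Ω'`, at a.e. point where `f` is
differentiable and `0 < J_f(x) < ∞`, the metric dilatation and the fine dilatation
coincide: `K_f(x) = K^fine_f(x)`. -/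
theorem Kmetric_eq_Kfine (hn : 2 ≤ n) (Ω Ω' : Set (En n)) (hΩ : IsOpen Ω)
    (hΩ' : IsOpen Ω') (f : En n → En n) (g : En n → (En n →L[ℝ] En n))
    (hcont : ContinuousOn f Ω) (hinj : InjOn f Ω) (himg : f '' Ω = Ω')
    (hopen : ∀ V ⊆ Ω, IsOpen V → IsOpen (f '' V))
    (hfloc : LocallyIntegrableOn f Ω)
    (hgloc : LocallyIntegrableOn (fun x => ‖g x‖) Ω)
    (hweak : HasWeakGradOn f g Ω) :
    ∀ᵐ x ∂(volume.restrict Ω),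
      (DifferentiableAt ℝ f x ∧ 0 < Jvol f x ∧ Jvol f x < ∞) →
        Kmetric f x = Kfine f x :=
  .of_forall fun _ ⟨hdiff, hJ, _⟩ => Kmetric_eq_Kfine_general hn hdiff.hasFDerivAt
    (ne_zero_of_Jvol_pos (by omega) hdiff.hasFDerivAt hJ)

end
end
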